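/- Let 0 < p ≤ 1 and δ > n/p − (n+1)/2, and suppose that δ − (n−1)/2 is not a positive integer. Then there exists a constant C > 0, independent of f and of R, such that for every 0 < R < ∞ and every f in the (unweighted) weak Hardy space WH^p(R^n) one has ‖T^δ_R f‖_{WH^p} ≤ C ‖f‖_{WH^p}. -/

import Mathlib

/-!
Write `K_δ` for the Bochner–Riesz kernel and `a = (n+1)/2 + δ`, so that the hypothesis on `δ` says
`a > n/p`. The grand maximal function of `T f` is bounded pointwise by an `L^q`-maximal function of
that of `f`, for some `q < p`, and the Hardy–Littlewood theorem on weak Lebesgue spaces concludes;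
no atomic decomposition is involved. By dilation it suffices to treat `R = 1`.

*The kernel.* The relations `∇K_δ = -(2π²/(δ+1)) K_{δ+1} x` and
`x · ∇K_{δ+1} = 2(δ+1)(K_δ - K_{δ+1}) - n K_{δ+1}` show that along a ray the pair
`(r^a K_δ, (π/(δ+1)) r^{a+1} K_{δ+1})` solves a rotation system perturbed by terms of size `a/r`. A
corrected energy is almost conserved, so the pair is bounded above and below. This replaces Bessel
asymptotics: it gives `|D^α K_δ(x)| ≤ C (1+|x|)^{-a}` for every `α`, and an amplitude that does not
degenerate.

*Convergence.* Here `f` is an arbitrary function, and `T f (x)` is `0` by convention wherever the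
defining integral diverges. By the lower bound on the amplitude, convergence at two generic points
`x, x'` controls `f` against the full weight `(1+|y|)^{-a}`, since `K(x-·)` and `K(x'-·)` are not
small together. Hence either the integral diverges almost everywhere, and `T f = 0` almost
everywhere, or `(1+|y|)^{-a} f` is integrable and `ψ_t * (K * f) = (ψ_t * K) * f`.

*The pointwise bound.* Let `b = min (a, N+n+1)`, which exceeds `n/p`. For a test function `ψ`, the
function `ψ_t * K` is a dilate `η_m` of a function whose derivatives up to order `N+1` are bounded
by `A (1+|u|)^{-b}`, uniformly in `ψ` and `t`. Localizing `η` around `u` with a bump and recentring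
at any `u'` with `|u'-u| ≤ 1` gives a test function of size `(1+|u|)^{-b}`, so that its contribution
is at most `C (1+|u|)^{-b} G⁺f (x - m u')`. Integrating over `u`, with `n/b < q < p`, yields
`G⁺(T f) ≤ C (M((G⁺f)^q))^{1/q}`. The maximal operator `M` is bounded on weak `L^{p/q}` because
`p/q > 1`.
-/

open MeasureTheory Real Complex Set
open scoped ENNReal NNReal FourierTransform

noncomputable section

/-- Euclidean space `ℝⁿ`. -/
abbrev Euc (n : ℕ) := EuclideanSpace ℝ (Fin n)

/-- The axis-parallel closed cube centered at `x₀` with side length `r`. -/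
def cube {n : ℕ} (x₀ : Euc n) (r : ℝ) : Set (Euc n) :=
  {y | ∀ i, |y i - x₀ i| ≤ r / 2}

/-- The weighted measure `w(E) = ∫_E w(x) dx`. -/
def wMeasure {n : ℕ} (w : Euc n → ℝ) : Measure (Euc n) :=
  (volume : Measure (Euc n)).withDensity fun x => ENNReal.ofReal (w x)

/-- The Muckenhoupt class `A₁`: `w` is nonnegative, locally integrable, and the average of `w`
over any cube is dominated by a constant times the essential infimum of `w` over that cube. -/
def IsA1 {n : ℕ} (w : Euc n → ℝ) : Prop :=
  (∀ x, 0 ≤ w x) ∧ LocallyIntegrable w volume ∧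
    ∃ C : ℝ, 0 < C ∧ ∀ (x₀ : Euc n) (r : ℝ), 0 < r →
      (∫ x in cube x₀ r, w x) / r ^ n ≤ C * essInf w (volume.restrict (cube x₀ r))

/-- The Muckenhoupt class `A_q`, `1 < q < ∞`. -/
def IsAq {n : ℕ} (w : Euc n → ℝ) (q : ℝ) : Prop :=
  (∀ x, 0 ≤ w x) ∧ LocallyIntegrable w volume ∧
    ∃ C : ℝ, 0 < C ∧ ∀ (x₀ : Euc n) (r : ℝ), 0 < r →
      ((∫ x in cube x₀ r, w x) / r ^ n) *
        ((∫ x in cube x₀ r, w x ^ (-1 / (q - 1))) / r ^ n) ^ (q - 1) ≤ C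

/-- The critical index `q_w = inf {q > 1 : w ∈ A_q}` of a weight `w`. -/
def criticalIndex {n : ℕ} (w : Euc n → ℝ) : ℝ :=
  sInf {q : ℝ | 1 < q ∧ IsAq w q}

/-- The `L¹`-dilation `g_t(x) = t⁻ⁿ g(x / t)`. -/
def dil {n : ℕ} (g : Euc n → ℂ) (t : ℝ) (x : Euc n) : ℂ :=
  ((t ^ n)⁻¹ : ℝ) • g ((t⁻¹ : ℝ) • x)

/-- The Bochner-Riesz kernel `φ` of order `δ`, i.e. the inverse Fourier transform of
`ξ ↦ (1 - |ξ|²)₊^δ`. -/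
def brKernel (n : ℕ) (δ : ℝ) : Euc n → ℂ :=
  𝓕⁻ fun ξ : Euc n => (Complex.ofReal (((1 - ‖ξ‖ ^ 2) ⊔ 0) ^ δ))

/-- The Bochner-Riesz operator `T^δ_R f = φ_{1/R} * f` of order `δ`. -/
def brOp (n : ℕ) (δ R : ℝ) (f : Euc n → ℂ) (x : Euc n) : ℂ :=
  ∫ y, dil (brKernel n δ) R⁻¹ (x - y) * f y

/-- The maximal Bochner-Riesz operator `T^δ_* f(x) = sup_{R > 0} |T^δ_R f(x)|`. -/
def maxBR (n : ℕ) (δ : ℝ) (f : Euc n → ℂ) (x : Euc n) : ℝ≥0∞ :=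
  ⨆ (R : ℝ) (_ : 0 < R), (‖brOp n δ R f x‖₊ : ℝ≥0∞)

/-- Partial derivative in the `i`-th coordinate direction. -/
def pderiv' {n : ℕ} (i : Fin n) (f : Euc n → ℂ) : Euc n → ℂ :=
  fun x => fderiv ℝ f x (EuclideanSpace.single i 1)

/-- The multi-index partial derivative `D^α f`. -/
def mderiv {n : ℕ} (α : Fin n → ℕ) (f : Euc n → ℂ) : Euc n → ℂ :=
  (((List.finRange n).map fun i => (pderiv' i)^[α i]).foldr (· ∘ ·) id) f

/-- The test function class
`𝒜_N = {φ ∈ 𝒮 : sup_x sup_{|α| ≤ N+1} (1+|x|)^{N+n+1} |D^α φ(x)| ≤ 1}`. -/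
def inTestClass {n : ℕ} (N : ℕ) (φ : SchwartzMap (Euc n) ℂ) : Prop :=
  ∀ (x : Euc n) (α : Fin n → ℕ), (∑ i, α i) ≤ N + 1 →
    (1 + ‖x‖) ^ (N + n + 1) * ‖mderiv α (⇑φ) x‖ ≤ 1

/-- The radial grand maximal function
`G⁺ f(x) = sup_{φ ∈ 𝒜_N} sup_{t > 0} |(φ_t * f)(x)|`. -/
def grandMax {n : ℕ} (N : ℕ) (f : Euc n → ℂ) (x : Euc n) : ℝ≥0∞ :=
  ⨆ (φ : SchwartzMap (Euc n) ℂ) (_ : inTestClass N φ) (t : ℝ) (_ : 0 < t),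
    (‖∫ y, dil (⇑φ) t (x - y) * f y‖₊ : ℝ≥0∞)

/-- The weak `L^p` quasinorm `sup_{λ > 0} λ · μ({x : g(x) > λ})^{1/p}` of an
`ℝ≥0∞`-valued function with respect to the measure `μ`. -/
def weakNorm {n : ℕ} (μ : Measure (Euc n)) (p : ℝ) (g : Euc n → ℝ≥0∞) : ℝ≥0∞ :=
  ⨆ (lam : ℝ≥0) (_ : 0 < lam), (lam : ℝ≥0∞) * μ {x | (lam : ℝ≥0∞) < g x} ^ (1 / p)

/-- The weak Hardy space quasinorm `‖f‖_{WH^p_w} = ‖G⁺ f‖_{WL^p_w}`, with grand maximal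
function taken over the test class `𝒜_N`. -/
def whNorm {n : ℕ} (N : ℕ) (μ : Measure (Euc n)) (p : ℝ) (f : Euc n → ℂ) : ℝ≥0∞ :=
  weakNorm μ p (grandMax N f)

/-- The Hardy-Littlewood maximal function (over cubes containing `x`). -/
def hlMax {n : ℕ} (f : Euc n → ℂ) (x : Euc n) : ℝ≥0∞ :=
  ⨆ (x₀ : Euc n) (r : ℝ) (_ : 0 < r) (_ : x ∈ cube x₀ r),
    (volume (cube x₀ r))⁻¹ * ∫⁻ y in cube x₀ r, (‖f y‖₊ : ℝ≥0∞)

/-! ### The Fourier transform of compactly supported functions -/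

section Fourier

lemma sum_inner_smul_map_orthonormalBasis {ι V F : Type*} [Fintype ι]
    [NormedAddCommGroup V] [InnerProductSpace ℝ V] [NormedAddCommGroup F] [NormedSpace ℝ F]
    (b : OrthonormalBasis ι ℝ V) (L : V →L[ℝ] F) (w : V) :
    ∑ i, inner ℝ w (b i) • L (b i) = L w := by
  conv_rhs => rw [← b.sum_repr' w]
  simp only [map_sum, map_smul, real_inner_comm]

variable {V F : Type*} [NormedAddCommGroup V] [InnerProductSpace ℝ V] [FiniteDimensional ℝ V]
  [MeasurableSpace V] [BorelSpace V] [NormedAddCommGroup F] {f : V → F}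

lemma integrable_norm_pow_mul_norm (hf : Continuous f) (hs : HasCompactSupport f) (k : ℕ) :
    Integrable fun v => ‖v‖ ^ k * ‖f v‖ :=
  Continuous.integrable_of_hasCompactSupport (by fun_prop) hs.norm.mul_left

variable [NormedSpace ℂ F]

lemma fderiv_fourier_apply (hf : Continuous f) (hs : HasCompactSupport f) (x v : V) :
    fderiv ℝ (𝓕 f) x v = -(2 * π * I) • 𝓕 (fun w => inner ℝ w v • f w) x := by
  have hi := hf.integrable_of_hasCompactSupport (μ := volume) hs
  have hi1 : Integrable fun w => ‖w‖ * ‖f w‖ := by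
    simpa only [pow_one] using integrable_norm_pow_mul_norm hf hs 1
  have hi2 : Integrable (VectorFourier.fourierSMulRight (innerSL ℝ) f) := by
    refine (hi1.const_mul (2 * π * ‖innerSL (E := V) ℝ‖)).mono'
      (hi.aestronglyMeasurable.fourierSMulRight) (.of_forall fun w => ?_)
    rw [mul_assoc]
    simpa only [mul_assoc] using VectorFourier.norm_fourierSMulRight_le (innerSL ℝ) f w
  rw [Real.fderiv_fourier hi hi1, Real.fourier_continuousLinearMap_apply hi2, Real.fourier_eq,
    Real.fourier_eq, ← integral_smul]
  congr with w
  simp only [VectorFourier.fourierSMulRight_apply, smul_comm (𝐞 _)]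
  rfl

lemma fourier_fderiv_apply (hf : ContDiff ℝ 1 f) (hs : HasCompactSupport f) (x v : V) :
    𝓕 (fun w => fderiv ℝ f w v) x = (2 * π * I) • inner ℝ x v • 𝓕 f x := by
  have hi : Integrable (fderiv ℝ f) :=
    (hf.continuous_fderiv one_ne_zero).integrable_of_hasCompactSupport (hs.fderiv ℝ)
  rw [← Real.fourier_continuousLinearMap_apply hi, Real.fourier_fderiv
    (hf.continuous.integrable_of_hasCompactSupport hs) (hf.differentiable one_ne_zero) hi]
  simp only [VectorFourier.fourierSMulRight_apply, neg_apply, neg_smul, smul_neg, neg_neg]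
  rfl

/-- Since `𝓕` turns `∂ᵢ` into multiplication by `2πi xᵢ` and multiplication by `wᵢ` into
`-∂ᵢ / 2πi`, it turns the divergence of `w ↦ f w • w` into `-x · ∇`. -/
lemma fourier_fderiv_apply_self (hf : ContDiff ℝ 1 f) (hs : HasCompactSupport f) (x : V) :
    𝓕 (fun w => Module.finrank ℝ V • f w + fderiv ℝ f w w) x = -fderiv ℝ (𝓕 f) x x := by
  set b := stdOrthonormalBasis ℝ V
  have hcoord (i) : 𝓕 (fun w => f w + inner ℝ w (b i) • fderiv ℝ f w (b i)) x =
      -(inner ℝ x (b i) • fderiv ℝ (𝓕 f) x (b i)) := by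
    have hg : ContDiff ℝ 1 fun w => inner ℝ w (b i) • f w :=
      (contDiff_id.inner ℝ contDiff_const).smul hf
    have hd (w) : fderiv ℝ (fun w => inner ℝ w (b i) • f w) w (b i) =
        f w + inner ℝ w (b i) • fderiv ℝ f w (b i) := by
      have hi : DifferentiableAt ℝ (fun w => inner ℝ w (b i)) w :=
        differentiableAt_id.inner ℝ (differentiableAt_const _)
      rw [fderiv_fun_smul hi (hf.differentiable one_ne_zero w)]
      simp [fderiv_inner_apply, add_comm]
    rw [← funext hd, fourier_fderiv_apply hg (hs.smul_left (f := fun w => inner ℝ w (b i))),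
      fderiv_fourier_apply hf.continuous hs]
    simp only [neg_smul, smul_neg, neg_neg, smul_comm (2 * π * I)]
  have hint (i) : Integrable fun w =>
      𝐞 (-inner ℝ w x) • (f w + inner ℝ w (b i) • fderiv ℝ f w (b i)) := by
    have _ := hf.continuous_fderiv one_ne_zero
    refine (Real.fourierIntegral_convergent_iff x).2
      (Continuous.integrable_of_hasCompactSupport (by fun_prop) (hs.add ?_))
    exact (hs.fderiv_apply ℝ (b i)).smul_left (f := fun w => inner ℝ w (b i))
  calc 𝓕 (fun w => Module.finrank ℝ V • f w + fderiv ℝ f w w) x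
      = ∑ i, 𝓕 (fun w => f w + inner ℝ w (b i) • fderiv ℝ f w (b i)) x := by
        simp only [Real.fourier_eq]
        rw [← integral_finsetSum _ fun i _ => hint i]
        simp only [← Finset.smul_sum, Finset.sum_add_distrib, Finset.sum_const, Finset.card_univ,
          Fintype.card_fin, sum_inner_smul_map_orthonormalBasis]
    _ = -fderiv ℝ (𝓕 f) x x := by
        simp only [hcoord, Finset.sum_neg_distrib, sum_inner_smul_map_orthonormalBasis]

end Fourier

lemma hasDerivAt_posPart_rpow {p : ℝ} (hp : 1 < p) (s : ℝ) :
    HasDerivAt (fun s : ℝ => (s ⊔ 0) ^ p) (p * (s ⊔ 0) ^ (p - 1)) s := by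
  have hneg (s : ℝ) (hs : s ≤ 0) : (s ⊔ 0) ^ p = 0 := by
    rw [max_eq_right hs, Real.zero_rpow (by linarith)]
  have hpos (s : ℝ) (hs : 0 ≤ s) : (s ⊔ 0) ^ p = s ^ p := by rw [max_eq_left hs]
  have hleft (hs : s ≤ 0) :
      HasDerivWithinAt (fun s : ℝ => (s ⊔ 0) ^ p) (p * (s ⊔ 0) ^ (p - 1)) (Iic 0) s := by
    rw [max_eq_right hs, Real.zero_rpow (by linarith), mul_zero]
    exact (hasDerivWithinAt_const s _ 0).congr hneg (hneg s hs)
  have hright (hs : 0 ≤ s) :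
      HasDerivWithinAt (fun s : ℝ => (s ⊔ 0) ^ p) (p * (s ⊔ 0) ^ (p - 1)) (Ici 0) s := by
    rw [max_eq_left hs]
    exact (Real.hasDerivAt_rpow_const (.inr hp.le)).hasDerivWithinAt.congr hpos (hpos s hs)
  rcases lt_trichotomy s 0 with h | rfl | h
  · exact (hleft h.le).hasDerivAt (Iic_mem_nhds h)
  · rw [← hasDerivWithinAt_univ, ← Iic_union_Ici (a := (0 : ℝ))]
    exact (hleft le_rfl).union (hright le_rfl)
  · exact (hright h.le).hasDerivAt (Ici_mem_nhds h)

/-! ### The Bochner–Riesz multiplier and kernel -/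

/-- The Bochner–Riesz multiplier `(1 - |ξ|²)₊^δ`, whose inverse Fourier transform is
`brKernel n δ`. -/
def brMult (n : ℕ) (δ : ℝ) (ξ : Euc n) : ℂ :=
  Complex.ofReal (((1 - ‖ξ‖ ^ 2) ⊔ 0) ^ δ)

section Kernel

variable (n : ℕ) {δ : ℝ}

lemma brKernel_eq_fourier (δ : ℝ) : brKernel n δ = 𝓕 (brMult n δ) := by
  change 𝓕⁻ (brMult n δ) = _
  rw [Real.fourierInv_eq_fourier_comp_neg]
  simp only [brMult, norm_neg]
  rfl

lemma continuous_brMult (hδ : 0 < δ) : Continuous (brMult n δ) :=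
  Complex.continuous_ofReal.comp <|
    Continuous.rpow_const (by fun_prop) fun _ => .inr hδ.le

lemma brMult_eq_zero (hδ : 0 < δ) {ξ : Euc n} (h : 1 ≤ ‖ξ‖) : brMult n δ ξ = 0 := by
  rw [brMult, max_eq_right (by nlinarith), Real.zero_rpow hδ.ne', Complex.ofReal_zero]

lemma hasCompactSupport_brMult (hδ : 0 < δ) : HasCompactSupport (brMult n δ) :=
  .intro (isCompact_closedBall 0 1) fun ξ hξ =>
    brMult_eq_zero n hδ (by rw [mem_closedBall_zero_iff, not_le] at hξ; exact hξ.le)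

lemma integrable_brMult (hδ : 0 < δ) : Integrable (brMult n δ) :=
  (continuous_brMult n hδ).integrable_of_hasCompactSupport (hasCompactSupport_brMult n hδ)

lemma norm_brKernel_le (δ : ℝ) (x : Euc n) : ‖brKernel n δ x‖ ≤ ∫ ξ, ‖brMult n δ ξ‖ := by
  rw [brKernel_eq_fourier]
  exact VectorFourier.norm_fourierIntegral_le_integral_norm ..

lemma hasFDerivAt_brMult (hδ : 0 < δ) (ξ : Euc n) :
    HasFDerivAt (brMult n (δ + 1))
      ((innerSL ℝ ξ).smulRight (-2 * (δ + 1) * brMult n δ ξ : ℂ)) ξ := by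
  have hsq : HasFDerivAt (fun ξ : Euc n => 1 - ‖ξ‖ ^ 2) (-(2 • innerSL ℝ ξ)) ξ := by
    simpa using (hasStrictFDerivAt_norm_sq ξ).hasFDerivAt.const_sub 1
  have hpow := (hasDerivAt_posPart_rpow (p := δ + 1) (by linarith) _).comp_hasFDerivAt ξ hsq
  refine (Complex.ofRealCLM.hasFDerivAt.comp ξ hpow).congr_fderiv ?_
  ext v
  simp [brMult]
  ring

lemma fderiv_brMult_apply (hδ : 0 < δ) (ξ v : Euc n) :
    fderiv ℝ (brMult n (δ + 1)) ξ v = -2 * (δ + 1) * (inner ℝ ξ v • brMult n δ ξ) := by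
  rw [(hasFDerivAt_brMult n hδ ξ).fderiv, ContinuousLinearMap.smulRight_apply,
    innerSL_apply_apply, mul_smul_comm]

lemma contDiff_one_brMult (hδ : 0 < δ) : ContDiff ℝ 1 (brMult n (δ + 1)) := by
  have hfd := funext fun ξ => (hasFDerivAt_brMult n hδ ξ).fderiv
  have hc := continuous_brMult n hδ
  exact contDiff_one_iff_fderiv.2
    ⟨fun ξ => (hasFDerivAt_brMult n hδ ξ).differentiableAt, by rw [hfd]; fun_prop⟩

lemma norm_sq_smul_brMult (hδ : 0 < δ) (ξ : Euc n) :
    ‖ξ‖ ^ 2 • brMult n δ ξ = brMult n δ ξ - brMult n (δ + 1) ξ := by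
  rcases le_or_gt 1 ‖ξ‖ with h | h
  · rw [brMult_eq_zero n hδ h, brMult_eq_zero n (by linarith) h, smul_zero, sub_zero]
  · have h1 : 0 < 1 - ‖ξ‖ ^ 2 := by nlinarith [norm_nonneg ξ]
    simp only [brMult, max_eq_left h1.le, Real.rpow_add_one h1.ne', Complex.real_smul]
    push_cast
    ring

lemma contDiff_brKernel (hδ : 0 < δ) : ContDiff ℝ (⊤ : ℕ∞) (brKernel n δ) := by
  rw [brKernel_eq_fourier]
  exact Real.contDiff_fourier fun k _ => integrable_norm_pow_mul_norm (continuous_brMult n hδ)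
    (hasCompactSupport_brMult n hδ) k

lemma continuous_brKernel (hδ : 0 < δ) : Continuous (brKernel n δ) :=
  (contDiff_brKernel n hδ).continuous

/-- The multipliers satisfy `∇ m_{δ+1} = -2(δ+1) m_δ ξ`, and `𝓕` exchanges differentiation and
multiplication by the coordinates. -/
lemma fderiv_brKernel (hδ : 0 < δ) (x : Euc n) :
    fderiv ℝ (brKernel n δ) x =
      (innerSL ℝ x).smulRight (-(2 * π ^ 2 / (δ + 1)) * brKernel n (δ + 1) x : ℂ) := by
  have hδ1 : (δ + 1 : ℂ) ≠ 0 := by norm_cast; linarith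
  ext v
  have hgrad := fourier_fderiv_apply (contDiff_one_brMult n hδ)
    (hasCompactSupport_brMult n (by linarith)) x v
  simp only [fderiv_brMult_apply n hδ, ← smul_eq_mul (-2 * (δ + 1) : ℂ)] at hgrad
  rw [← brKernel_eq_fourier, Real.fourier_eq] at hgrad
  simp only [smul_comm (𝐞 _), integral_smul] at hgrad
  rw [brKernel_eq_fourier n δ, fderiv_fourier_apply (continuous_brMult n hδ)
    (hasCompactSupport_brMult n hδ), Real.fourier_eq, ContinuousLinearMap.smulRight_apply,
    innerSL_apply_apply]
  simp only [smul_comm (𝐞 _)]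
  simp only [smul_eq_mul, Complex.real_smul] at hgrad ⊢
  linear_combination (norm := (field_simp; ring)) (π * I / (δ + 1)) * hgrad +
    2 * π ^ 2 / (δ + 1) * ((inner ℝ x v : ℝ) : ℂ) * brKernel n (δ + 1) x * I_sq

lemma fderiv_brKernel_apply_self (hδ : 0 < δ) (x : Euc n) :
    fderiv ℝ (brKernel n (δ + 1)) x x =
      2 * (δ + 1) * (brKernel n δ x - brKernel n (δ + 1) x) - n * brKernel n (δ + 1) x := by
  have hδ1 : 0 < δ + 1 := by linarith
  have hdiv := fourier_fderiv_apply_self (contDiff_one_brMult n hδ)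
    (hasCompactSupport_brMult n hδ1) x
  have hmult (w : Euc n) : Module.finrank ℝ (Euc n) • brMult n (δ + 1) w +
      fderiv ℝ (brMult n (δ + 1)) w w =
      ((n + 2 * (δ + 1) : ℝ) : ℂ) • brMult n (δ + 1) w - (2 * (δ + 1) : ℂ) • brMult n δ w := by
    rw [fderiv_brMult_apply n hδ, real_inner_self_eq_norm_sq, norm_sq_smul_brMult n hδ,
      finrank_euclideanSpace_fin]
    simp only [nsmul_eq_mul, smul_eq_mul]
    push_cast
    ring
  have hint {ε : ℝ} (hε : 0 < ε) := (Real.fourierIntegral_convergent_iff x).2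
    (integrable_brMult n hε)
  rw [funext hmult, Real.fourier_eq] at hdiv
  simp only [smul_sub, smul_comm (𝐞 _)] at hdiv
  rw [integral_sub ((hint hδ1).fun_smul _) ((hint hδ).fun_smul _), integral_smul, integral_smul,
    ← Real.fourier_eq, ← Real.fourier_eq, ← brKernel_eq_fourier, ← brKernel_eq_fourier] at hdiv
  simp only [smul_eq_mul] at hdiv
  push_cast at hdiv
  linear_combination hdiv

lemma brKernel_eq_of_norm_eq (δ : ℝ) {x y : Euc n} (h : ‖x‖ = ‖y‖) :
    brKernel n δ x = brKernel n δ y := by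
  set A := (ℝ ∙ (x - y))ᗮ.reflection
  have hA : brMult n δ ∘ A = brMult n δ := funext fun z => by simp [brMult]
  have hcomp := Real.fourierInv_comp_linearIsometry A (brMult n δ) x
  rwa [hA, Submodule.reflection_sub h] at hcomp

lemma brKernel_zero_ne_zero (hδ : 0 < δ) : brKernel n δ 0 ≠ 0 := by
  have hc : Continuous fun v : Euc n => ((1 - ‖v‖ ^ 2) ⊔ 0) ^ δ :=
    Continuous.rpow_const (by fun_prop) fun _ => .inr hδ.le
  have hcast : ∫ v : Euc n, brMult n δ v = ((∫ v : Euc n, ((1 - ‖v‖ ^ 2) ⊔ 0) ^ δ : ℝ) : ℂ) :=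
    integral_ofReal
  have hpos : 0 < ∫ v : Euc n, ((1 - ‖v‖ ^ 2) ⊔ 0) ^ δ := by
    refine hc.integral_pos_of_hasCompactSupport_nonneg_nonzero (x := 0)
      (.intro (isCompact_closedBall 0 1) fun v hv => ?_) (fun v => by positivity) (by simp)
    rw [mem_closedBall_zero_iff, not_le] at hv
    rw [max_eq_right (by nlinarith), Real.zero_rpow hδ.ne']
  rw [brKernel_eq_fourier, Real.fourier_eq]
  simp only [inner_zero_right, neg_zero, AddChar.map_zero_eq_one, one_smul, hcast]
  exact Complex.ofReal_ne_zero.2 hpos.ne'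

end Kernel

/-! ### A perturbed harmonic oscillator -/

lemma antitoneOn_mul_exp_neg {D : Set ℝ} (hD : Convex ℝ D) {F F' g g' : ℝ → ℝ}
    (hF : ∀ t ∈ D, HasDerivAt F (F' t) t) (hg : ∀ t ∈ D, HasDerivAt g (g' t) t)
    (hle : ∀ t ∈ D, F' t ≤ g' t * F t) : AntitoneOn (fun t => F t * Real.exp (-g t)) D := by
  have hd (t) (ht : t ∈ D) : HasDerivAt (fun t => F t * Real.exp (-g t))
      ((F' t - g' t * F t) * Real.exp (-g t)) t :=
    ((hF t ht).mul (hg t ht).fun_neg.exp).congr_deriv (by ring)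
  refine antitoneOn_of_hasDerivWithinAt_nonpos hD
    (fun t ht => (hd t ht).continuousAt.continuousWithinAt)
    (fun t ht => (hd t (interior_subset ht)).hasDerivWithinAt) fun t ht => ?_
  exact mul_nonpos_of_nonpos_of_nonneg (sub_nonpos.2 (hle t (interior_subset ht)))
    (Real.exp_pos _).le

/-- The system `p' = (a/r) p - 2π z`, `z' = 2π p - (a/r) z` on `(0, ∞)`, a perturbation of the
harmonic oscillator of frequency `2π`. Suitably normalized, the radial profiles of the
Bochner–Riesz kernels of orders `δ` and `δ + 1` solve it. -/
structure OscSystem {F : Type*} [NormedAddCommGroup F] [NormedSpace ℝ F] (a : ℝ)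
    (p z : ℝ → F) : Prop where
  hasDerivAt_fst : ∀ r, 0 < r → HasDerivAt p ((a / r) • p r - (2 * π) • z r) r
  hasDerivAt_snd : ∀ r, 0 < r → HasDerivAt z ((2 * π) • p r - (a / r) • z r) r

namespace OscSystem

/-- The energy `|p|² + |z|²` of the unperturbed oscillator. -/
def energy {F : Type*} [NormedAddCommGroup F] (p z : ℝ → F) (r : ℝ) : ℝ :=
  ‖p r‖ ^ 2 + ‖z r‖ ^ 2

lemma energy_nonneg {F : Type*} [NormedAddCommGroup F] (p z : ℝ → F) (r : ℝ) :
    0 ≤ energy p z r := by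
  unfold energy; positivity

section NormedSpace

variable {F : Type*} [NormedAddCommGroup F] [NormedSpace ℝ F] {a : ℝ} {p z : ℝ → F}

lemma norm_sub_rotation_le (h : OscSystem a p z) (ha : 0 ≤ a) {r₀ B : ℝ} (hr₀ : 0 < r₀)
    (hB : ∀ t, r₀ ≤ t → ‖p t‖ + ‖z t‖ ≤ B) {r s : ℝ} (hr : r₀ ≤ r) (hs : r₀ ≤ s) :
    ‖p s - (Real.cos (2 * π * (s - r)) • p r - Real.sin (2 * π * (s - r)) • z r)‖ ≤
      a / r₀ * B * |s - r| := by
  set G : ℝ → F := fun t =>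
    Real.cos (2 * π * (s - t)) • p t - Real.sin (2 * π * (s - t)) • z t with hG
  have hd (t) (ht : t ∈ Ici r₀) : HasDerivAt G
      ((a / t) • (Real.cos (2 * π * (s - t)) • p t + Real.sin (2 * π * (s - t)) • z t)) t := by
    have hangle : HasDerivAt (fun t => 2 * π * (s - t)) (-(2 * π)) t := by
      simpa only [mul_neg, mul_one] using ((hasDerivAt_id' t).const_sub s).const_mul (2 * π)
    have ht0 : 0 < t := hr₀.trans_le ht
    refine ((hangle.cos.smul (h.hasDerivAt_fst t ht0)).sub
      (hangle.sin.smul (h.hasDerivAt_snd t ht0))).congr_deriv ?_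
    module
  have hbound (t) (ht : t ∈ Ici r₀) :
      ‖(a / t) • (Real.cos (2 * π * (s - t)) • p t + Real.sin (2 * π * (s - t)) • z t)‖ ≤
        a / r₀ * B := by
    have hrot : ‖Real.cos (2 * π * (s - t)) • p t + Real.sin (2 * π * (s - t)) • z t‖ ≤ B := by
      refine (norm_add_le_of_le ?_ ?_).trans (hB t ht) <;> rw [norm_smul]
      · exact mul_le_of_le_one_left (norm_nonneg _) (Real.abs_cos_le_one _)
      · exact mul_le_of_le_one_left (norm_nonneg _) (Real.abs_sin_le_one _)
    have hat : 0 ≤ a / t := div_nonneg ha (hr₀.trans_le ht).le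
    rw [norm_smul, Real.norm_of_nonneg hat]
    gcongr
    exact ht
  simpa [hG] using (convex_Ici r₀).norm_image_sub_le_of_norm_hasDerivWithin_le
    (fun t ht => (hd t ht).hasDerivWithinAt) hbound hr hs

open Filter Topology in
/-- Two points at which `p` is small differ in phase by nearly a multiple of `π`: at such points
all of the energy is in `z`, which a rotation by any other angle turns back into `p`. -/
lemma exists_eventually_le_norm_add_norm (h : OscSystem a p z) (ha : 0 ≤ a) {r₀ ε B : ℝ}
    (hε : 0 < ε) (hB : ∀ t, r₀ ≤ t → ‖p t‖ + ‖z t‖ ≤ B)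
    (hlow : ∀ t, r₀ ≤ t → ε ≤ ‖p t‖ + ‖z t‖) {α : Type*} {l : Filter α} {u v : α → ℝ} {τ : ℝ}
    (hu : Tendsto u l atTop) (hv : Tendsto v l atTop) (huv : Tendsto (fun y => u y - v y) l (𝓝 τ))
    (hτ : Real.sin (2 * π * τ) ≠ 0) :
    ∃ c : ℝ, 0 < c ∧ ∀ᶠ y in l, c ≤ ‖p (u y)‖ + ‖p (v y)‖ := by
  have hmin : Tendsto (fun y => min (u y) (v y)) l atTop := tendsto_atTop.2 fun b => by
    filter_upwards [hu.eventually_ge_atTop b, hv.eventually_ge_atTop b] with y using le_min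
  have hlim : Tendsto (fun y => (|Real.sin (2 * π * (u y - v y))| * ε -
      a / min (u y) (v y) * B * |u y - v y|) / 2) l
      (𝓝 ((|Real.sin (2 * π * τ)| * ε - 0 * B * |τ|) / 2)) :=
    ((((Real.continuous_sin.tendsto _).comp (huv.const_mul (2 * π))).abs.mul_const ε).sub
      (((tendsto_const_nhds.div_atTop hmin).mul_const B).mul huv.abs)).div_const 2
  have hpos : 0 < |Real.sin (2 * π * τ)| * ε := mul_pos (abs_pos.2 hτ) hε
  refine ⟨|Real.sin (2 * π * τ)| * ε / 4, by positivity, ?_⟩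
  filter_upwards [hlim.eventually_const_le (u := |Real.sin (2 * π * τ)| * ε / 4) (by linarith),
    hmin.eventually_ge_atTop (max r₀ 1)] with y hy hmin'
  refine hy.trans ((div_le_iff₀' two_pos).2 ?_)
  have hr₀ : r₀ ≤ min (u y) (v y) := (le_max_left _ _).trans hmin'
  set s := Real.sin (2 * π * (u y - v y))
  have hs1 : |s| ≤ 1 := Real.abs_sin_le_one _
  have hrot := h.norm_sub_rotation_le ha (one_pos.trans_le ((le_max_right _ _).trans hmin'))
    (fun t ht => hB t (hr₀.trans ht)) (min_le_right (u y) (v y)) (min_le_left _ _)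
  have hcos : ‖Real.cos (2 * π * (u y - v y)) • p (v y)‖ ≤ ‖p (v y)‖ := by
    rw [norm_smul]
    exact mul_le_of_le_one_left (norm_nonneg _) (Real.abs_cos_le_one _)
  have hz : |s| * ‖z (v y)‖ ≤
      ‖p (u y)‖ + ‖p (v y)‖ + a / min (u y) (v y) * B * |u y - v y| := by
    have heq : s • z (v y) = p (u y) - (Real.cos (2 * π * (u y - v y)) • p (v y) - s • z (v y)) -
      (p (u y) - Real.cos (2 * π * (u y - v y)) • p (v y)) := by abel
    rw [← Real.norm_eq_abs, ← norm_smul, heq]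
    have hsum := norm_sub_le (p (u y)) (Real.cos (2 * π * (u y - v y)) • p (v y))
    exact (norm_sub_le_of_le hrot (hsum.trans (add_le_add_right hcos _))).trans_eq (by ring)
  have hε' := mul_le_mul_of_nonneg_left (hlow (v y) (hr₀.trans (min_le_right _ _)))
    (abs_nonneg s)
  have hpv := mul_le_of_le_one_left (norm_nonneg (p (v y))) hs1
  linarith [norm_nonneg (p (u y))]

end NormedSpace

variable {F : Type*} [NormedAddCommGroup F] [InnerProductSpace ℝ F] {a : ℝ} {p z : ℝ → F}

lemma abs_inner_le_energy (p z : ℝ → F) (r : ℝ) : |inner ℝ (p r) (z r)| ≤ energy p z r / 2 := by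
  have := two_mul_le_add_sq ‖p r‖ ‖z r‖
  have := abs_real_inner_le_norm (p r) (z r)
  unfold energy
  linarith

lemma hasDerivAt_energy (h : OscSystem a p z) {r : ℝ} (hr : 0 < r) :
    HasDerivAt (energy p z) (2 * a / r * (‖p r‖ ^ 2 - ‖z r‖ ^ 2)) r := by
  refine ((h.hasDerivAt_fst r hr).norm_sq.add (h.hasDerivAt_snd r hr).norm_sq).congr_deriv ?_
  simp only [inner_sub_right, inner_smul_right, real_inner_self_eq_norm_sq,
    real_inner_comm (p r) (z r)]
  ring

lemma energy_mul_rpow_le (h : OscSystem a p z) (ha : 0 ≤ a) {r s : ℝ} (hr : 0 < r)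
    (hrs : r ≤ s) : energy p z r * r ^ (2 * a) ≤ energy p z s * s ^ (2 * a) := by
  have hanti := antitoneOn_mul_exp_neg (convex_Ici r) (F := fun t => -energy p z t)
    (F' := fun t => -(2 * a / t * (‖p t‖ ^ 2 - ‖z t‖ ^ 2))) (g := fun t => -(2 * a) * Real.log t)
    (g' := fun t => -(2 * a) * t⁻¹) (fun t ht => (h.hasDerivAt_energy (hr.trans_le ht)).neg)
    (fun t ht => (Real.hasDerivAt_log (hr.trans_le ht).ne').const_mul _) fun t ht => by
      have : 0 ≤ 2 * a * t⁻¹ * ‖p t‖ ^ 2 :=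
        mul_nonneg (mul_nonneg (by linarith) (inv_nonneg.2 (hr.trans_le ht).le)) (sq_nonneg _)
      simp only [div_eq_mul_inv, energy]
      linarith
  have hle := hanti self_mem_Ici hrs hrs
  simp only [neg_mul, neg_neg, neg_le_neg_iff] at hle
  rwa [Real.rpow_def_of_pos hr, Real.rpow_def_of_pos (hr.trans_le hrs), mul_comm (Real.log r),
    mul_comm (Real.log s)]

/-- The energy corrected by `-(a/π) ⟪p, z⟫ / r`: its derivative is `O(1/r²)` relative to the
energy, whereas that of the energy itself is only `O(1/r)`. -/
def correctedEnergy (a : ℝ) (p z : ℝ → F) (r : ℝ) : ℝ :=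
  energy p z r - a / π * (inner ℝ (p r) (z r) / r)

lemma hasDerivAt_correctedEnergy (h : OscSystem a p z) {r : ℝ} (hr : 0 < r) :
    HasDerivAt (correctedEnergy a p z) (a / π * (inner ℝ (p r) (z r) / r ^ 2)) r := by
  have hquot := (((h.hasDerivAt_fst r hr).inner ℝ (h.hasDerivAt_snd r hr)).div
    (hasDerivAt_id r) hr.ne').const_mul (a / π)
  refine ((h.hasDerivAt_energy hr).sub hquot).congr_deriv ?_
  simp only [inner_sub_left, inner_sub_right, inner_smul_left, inner_smul_right,
    real_inner_self_eq_norm_sq, id, conj_trivial]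
  field_simp
  ring

lemma abs_correctedEnergy_sub_energy_le (ha : 0 ≤ a) {r : ℝ} (hr : 0 < r) (har : a ≤ r) :
    |correctedEnergy a p z r - energy p z r| ≤ energy p z r / 2 := by
  have hcoef : a / π / r ≤ 1 :=
    div_le_one_of_le₀ ((div_le_self ha (by linarith [Real.pi_gt_three])).trans har) hr.le
  calc |correctedEnergy a p z r - energy p z r| = a / π / r * |inner ℝ (p r) (z r)| := by
        rw [correctedEnergy, sub_sub_cancel_left, abs_neg, ← mul_div_assoc, ← div_mul_eq_mul_div,
          abs_mul, abs_of_nonneg (by positivity)]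
    _ ≤ energy p z r / 2 :=
        (mul_le_of_le_one_left (abs_nonneg _) hcoef).trans (abs_inner_le_energy p z r)

lemma abs_deriv_correctedEnergy_le (ha : 0 ≤ a) {r : ℝ} (hr : 0 < r) (har : a ≤ r) :
    |a / π * (inner ℝ (p r) (z r) / r ^ 2)| ≤ a / r ^ 2 * correctedEnergy a p z r := by
  have hcorr := neg_le_of_abs_le (abs_correctedEnergy_sub_energy_le (p := p) (z := z) ha hr har)
  have hinner := abs_inner_le_energy p z r
  calc |a / π * (inner ℝ (p r) (z r) / r ^ 2)| = a / r ^ 2 / π * |inner ℝ (p r) (z r)| := by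
        rw [← mul_div_assoc, ← div_mul_eq_mul_div, abs_mul, abs_of_nonneg (by positivity),
          div_right_comm]
    _ ≤ a / r ^ 2 * |inner ℝ (p r) (z r)| := by
        exact mul_le_mul_of_nonneg_right
          (div_le_self (by positivity) (by linarith [Real.pi_gt_three])) (abs_nonneg _)
    _ ≤ a / r ^ 2 * correctedEnergy a p z r := by
        gcongr
        linarith

lemma correctedEnergy_le_mul_exp (h : OscSystem a p z) (ha : 0 ≤ a) {r s : ℝ} (hr : 0 < r)
    (har : a ≤ r) (hrs : r ≤ s) :
    correctedEnergy a p z s ≤ correctedEnergy a p z r * Real.exp (a / r - a / s) ∧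
      correctedEnergy a p z r ≤ correctedEnergy a p z s * Real.exp (a / r - a / s) := by
  have hderiv (t) (ht : t ∈ Ici r) := abs_le.1
    (abs_deriv_correctedEnergy_le (p := p) (z := z) ha (hr.trans_le ht) (har.trans ht))
  have hinv (t) (ht : t ∈ Ici r) : HasDerivAt (fun t : ℝ => a / t) (-(a / t ^ 2)) t := by
    simpa only [div_eq_mul_inv, mul_neg] using
      (hasDerivAt_inv (hr.trans_le ht).ne').const_mul a
  have hanti := antitoneOn_mul_exp_neg (convex_Ici r)
    (fun t ht => h.hasDerivAt_correctedEnergy (hr.trans_le ht)) (fun t ht => (hinv t ht).neg)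
    (fun t ht => by linarith [hderiv t ht]) self_mem_Ici hrs hrs
  have hmono := antitoneOn_mul_exp_neg (convex_Ici r)
    (fun t ht => (h.hasDerivAt_correctedEnergy (hr.trans_le ht)).neg) hinv
    (fun t ht => by simp only [Pi.neg_apply]; linarith [hderiv t ht]) self_mem_Ici hrs hrs
  simp only [Pi.neg_apply, neg_mul, neg_neg, neg_le_neg_iff, Real.exp_neg] at hanti hmono
  rw [Real.exp_sub, ← mul_div_assoc, ← mul_div_assoc, le_div_iff₀ (Real.exp_pos _),
    le_div_iff₀ (Real.exp_pos _)]
  refine ⟨hanti, ?_⟩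
  rwa [← div_eq_mul_inv, ← div_eq_mul_inv, div_le_div_iff₀ (Real.exp_pos _) (Real.exp_pos _)]
    at hmono

lemma energy_comparable (h : OscSystem a p z) (ha : 0 ≤ a) {r s : ℝ} (hr : 0 < r) (har : a ≤ r)
    (hrs : r ≤ s) :
    energy p z s ≤ 3 * Real.exp 1 * energy p z r ∧
      energy p z r ≤ 3 * Real.exp 1 * energy p z s := by
  have hs := hr.trans_le hrs
  obtain ⟨hsr, hrs'⟩ := h.correctedEnergy_le_mul_exp ha hr har hrs
  have hcr := abs_le.1 (abs_correctedEnergy_sub_energy_le (p := p) (z := z) ha hr har)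
  have hcs := abs_le.1 (abs_correctedEnergy_sub_energy_le (p := p) (z := z) ha hs (har.trans hrs))
  have hexp : Real.exp (a / r - a / s) ≤ Real.exp 1 := by
    have := (div_le_one hr).2 har
    have : 0 ≤ a / s := by positivity
    gcongr
    linarith
  have := energy_nonneg p z r
  have := energy_nonneg p z s
  have hr' := mul_le_mul_of_nonneg_left hexp (by linarith : 0 ≤ correctedEnergy a p z r)
  have hs' := mul_le_mul_of_nonneg_left hexp (by linarith : 0 ≤ correctedEnergy a p z s)
  constructor <;> nlinarith [Real.exp_pos 1]

lemma exists_amplitude_bounds (h : OscSystem a p z) (ha : 0 < a) (hne : 0 < energy p z a) :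
    ∃ ε B : ℝ, 0 < ε ∧ ∀ r, a ≤ r → ε ≤ ‖p r‖ + ‖z r‖ ∧ ‖p r‖ + ‖z r‖ ≤ B := by
  refine ⟨√(energy p z a / (3 * Real.exp 1)), √(2 * (3 * Real.exp 1 * energy p z a)),
    by positivity, fun r hr => ?_⟩
  obtain ⟨hup, hlow⟩ := h.energy_comparable ha.le ha le_rfl hr
  unfold energy at hup hlow ⊢
  constructor
  · refine Real.sqrt_le_iff.2 ⟨by positivity, ?_⟩
    rw [div_le_iff₀' (by positivity)]
    refine hlow.trans (mul_le_mul_of_nonneg_left ?_ (by positivity))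
    nlinarith [mul_nonneg (norm_nonneg (p r)) (norm_nonneg (z r))]
  · refine Real.le_sqrt_of_sq_le ?_
    nlinarith [sq_nonneg (‖p r‖ - ‖z r‖)]

end OscSystem

/-! ### Asymptotics of the kernel -/

/-- The exponent `a = (n + 1) / 2 + δ` of the decay `|x|^{-a}` of the Bochner–Riesz kernel of
order `δ` on `ℝⁿ`. -/
def brExp (n : ℕ) (δ : ℝ) : ℝ := ((n : ℝ) + 1) / 2 + δ

lemma brExp_pos (n : ℕ) {δ : ℝ} (hδ : 0 < δ) : 0 < brExp n δ := by unfold brExp; positivity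

lemma rpow_neg_brExp (n : ℕ) (δ : ℝ) {t : ℝ} (ht : 0 < t) :
    t ^ (-brExp n δ) = t * t ^ (-brExp n (δ + 1)) := by
  have hexp : -brExp n δ = 1 + -brExp n (δ + 1) := by unfold brExp; ring
  rw [hexp, Real.rpow_add ht, Real.rpow_one]

section Decay

open Asymptotics

lemma isBigO_top_one_add_norm_rpow {V E : Type*} [NormedAddCommGroup V] [NormedAddCommGroup E]
    {f : V → E} {a r M B : ℝ} (ha : 0 ≤ a) (hr : 0 < r) (hB : 0 ≤ B) (hM : ∀ x, ‖f x‖ ≤ M)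
    (hf : ∀ x, r ≤ ‖x‖ → ‖f x‖ ≤ B * ‖x‖ ^ (-a)) :
    f =O[⊤] fun x => (1 + ‖x‖) ^ (-a) := by
  refine isBigO_top.2 ⟨max (B * (r⁻¹ + 1) ^ a) (M * (1 + r) ^ a), fun x => ?_⟩
  have hM0 : 0 ≤ M := (norm_nonneg _).trans (hM x)
  rw [Real.norm_of_nonneg (by positivity), Real.rpow_neg (by positivity), ← div_eq_mul_inv,
    le_div_iff₀ (by positivity), le_max_iff]
  rcases le_total r ‖x‖ with hx | hx
  · have hx0 : 0 < ‖x‖ := hr.trans_le hx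
    left
    calc ‖f x‖ * (1 + ‖x‖) ^ a ≤ B * ‖x‖ ^ (-a) * (1 + ‖x‖) ^ a := by gcongr; exact hf x hx
      _ = B * (‖x‖⁻¹ + 1) ^ a := by
          rw [mul_assoc, Real.rpow_neg hx0.le, ← Real.inv_rpow hx0.le,
            ← Real.mul_rpow (by positivity) (by positivity), mul_add, mul_one,
            inv_mul_cancel₀ hx0.ne']
      _ ≤ B * (r⁻¹ + 1) ^ a := by gcongr
  · right
    gcongr
    exact hM x

end Decay

section Asymptotics

open Filter Topology Asymptotics

variable (n : ℕ) {δ : ℝ}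

lemma hasDerivAt_brKernel_smul (hδ : 0 < δ) (ω : Euc n) (r : ℝ) :
    HasDerivAt (fun r : ℝ => brKernel n δ (r • ω)) (fderiv ℝ (brKernel n δ) (r • ω) ω) r :=
  ((contDiff_brKernel n hδ).differentiable (by simp) _).hasFDerivAt.comp_hasDerivAt r
    (by simpa using (hasDerivAt_id r).smul_const ω)

lemma oscSystem_brKernel (hδ : 0 < δ) {ω : Euc n} (hω : ‖ω‖ = 1) :
    OscSystem (brExp n δ) (fun r => r ^ brExp n δ • brKernel n δ (r • ω))
      (fun r => (π / (δ + 1) * r ^ (brExp n δ + 1)) • brKernel n (δ + 1) (r • ω)) where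
  hasDerivAt_fst r hr := by
    refine ((Real.hasDerivAt_rpow_const (p := brExp n δ) (.inl hr.ne')).smul
      (hasDerivAt_brKernel_smul n hδ ω r)).congr_deriv ?_
    have hδ1 : (δ + 1 : ℂ) ≠ 0 := by norm_cast; linarith
    have hr' : (r : ℂ) ≠ 0 := by exact_mod_cast hr.ne'
    rw [fderiv_brKernel n hδ, ContinuousLinearMap.smulRight_apply, innerSL_apply_apply,
      inner_smul_left, real_inner_self_eq_norm_sq, hω, Real.rpow_sub_one hr.ne',
      Real.rpow_add_one hr.ne']
    simp only [Complex.real_smul]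
    push_cast [conj_trivial]
    field_simp
    ring
  hasDerivAt_snd r hr := by
    have hδ1 : (δ + 1 : ℂ) ≠ 0 := by norm_cast; linarith
    have hr' : (r : ℂ) ≠ 0 := by exact_mod_cast hr.ne'
    have heuler := fderiv_brKernel_apply_self n hδ (r • ω)
    rw [map_smul, ← eq_inv_smul_iff₀ hr.ne'] at heuler
    have hexp : (n : ℂ) = 2 * (brExp n δ : ℝ) - 1 - 2 * δ := by
      push_cast [brExp]
      ring
    refine (((Real.hasDerivAt_rpow_const (p := brExp n δ + 1) (.inl hr.ne')).const_mul
      (π / (δ + 1))).smul (hasDerivAt_brKernel_smul n (by linarith) ω r)).congr_deriv ?_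
    rw [heuler, add_sub_cancel_right, Real.rpow_add_one hr.ne', hexp]
    simp only [Complex.real_smul]
    push_cast
    field_simp
    ring

variable {n}

/-- The energy at a positive radius does not vanish: by monotonicity the kernel would otherwise
vanish near the origin, where it is the integral of a positive function. -/
lemma exists_brKernel_profile (hn : 0 < n) (hδ : 0 < δ) :
    ∃ p z : ℝ → ℂ, OscSystem (brExp n δ) p z ∧
      (∀ x : Euc n, x ≠ 0 → brKernel n δ x = ‖x‖ ^ (-brExp n δ) • p ‖x‖) ∧
      ∀ r, 0 < r → 0 < OscSystem.energy p z r := by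
  set ω : Euc n := EuclideanSpace.single ⟨0, hn⟩ 1
  have hω : ‖ω‖ = 1 := by simp [ω]
  have hosc := oscSystem_brKernel n hδ hω
  refine ⟨_, _, hosc, fun x hx => ?_, fun s hs => ?_⟩
  · have hx0 : 0 < ‖x‖ := norm_pos_iff.2 hx
    rw [Real.rpow_neg hx0.le, inv_smul_smul₀ (by positivity)]
    exact brKernel_eq_of_norm_eq n δ (by rw [norm_smul, hω, norm_norm, mul_one])
  · refine (OscSystem.energy_nonneg _ _ s).lt_of_ne' fun hE => brKernel_zero_ne_zero n hδ ?_
    have hzero (r : ℝ) (hr : r ∈ Ioc 0 s) : brKernel n δ (r • ω) = 0 := by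
      have hr0 := hr.1
      have hmono := hosc.energy_mul_rpow_le (brExp_pos n hδ).le hr0 hr.2
      rw [hE, zero_mul] at hmono
      have hp : ‖r ^ brExp n δ • brKernel n δ (r • ω)‖ ^ 2 ≤ 0 :=
        (le_add_of_nonneg_right (sq_nonneg _)).trans
          (nonpos_of_mul_nonpos_left hmono (by positivity))
      have := pow_eq_zero_iff two_ne_zero |>.1 (hp.antisymm (sq_nonneg _))
      exact (smul_eq_zero.1 (norm_eq_zero.1 this)).resolve_left (by positivity)
    have hclosed : IsClosed {r : ℝ | brKernel n δ (r • ω) = 0} := by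
      have _ := continuous_brKernel n hδ
      exact isClosed_eq (by fun_prop) continuous_const
    have hclosure := hclosed.closure_subset_iff.2 hzero
    rw [closure_Ioc hs.ne] at hclosure
    simpa using hclosure (left_mem_Icc.2 hs.le)

lemma isBigO_brKernel (n : ℕ) (hδ : 0 < δ) :
    brKernel n δ =O[⊤] fun x => (1 + ‖x‖) ^ (-brExp n δ) := by
  have ha := brExp_pos n hδ
  rcases n.eq_zero_or_pos with rfl | hn
  · exact isBigO_top_one_add_norm_rpow ha.le one_pos zero_le_one (norm_brKernel_le 0 δ)
      fun x hx => absurd hx (by simp [Subsingleton.elim x 0])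
  · obtain ⟨p, z, hosc, hK, hE⟩ := exists_brKernel_profile hn hδ
    obtain ⟨ε, B, hε, hbound⟩ := hosc.exists_amplitude_bounds ha (hE _ ha)
    have hB : 0 ≤ B := hε.le.trans ((hbound _ le_rfl).1.trans (hbound _ le_rfl).2)
    refine isBigO_top_one_add_norm_rpow ha.le ha hB (norm_brKernel_le n δ) fun x hx => ?_
    rw [hK x (norm_pos_iff.1 (ha.trans_le hx)), norm_smul, Real.norm_of_nonneg (by positivity),
      mul_comm]
    gcongr
    exact (le_add_of_nonneg_right (norm_nonneg _)).trans (hbound _ hx).2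

lemma norm_iteratedFDeriv_clm_le {E F : Type*} [NormedAddCommGroup E] [NormedSpace ℝ E]
    [NormedAddCommGroup F] [NormedSpace ℝ F] (L : E →L[ℝ] F) (i : ℕ) (x : E) :
    ‖iteratedFDeriv ℝ i L x‖ ≤ ‖L‖ * (1 + ‖x‖) := by
  have hL := mul_nonneg (norm_nonneg L) (norm_nonneg x)
  rcases i with _ | _ | i
  · rw [norm_iteratedFDeriv_zero, mul_add]
    exact (L.le_opNorm x).trans (le_add_of_nonneg_left (by positivity))
  · rw [← norm_iteratedFDeriv_fderiv, norm_iteratedFDeriv_zero, L.fderiv]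
    linarith
  · rw [← norm_iteratedFDeriv_fderiv, funext fun x => L.fderiv (x := x),
      iteratedFDeriv_const_of_ne (by simp), Pi.zero_apply, norm_zero]
    positivity

set_option maxSynthPendingDepth 3 in
/-- Each differentiation produces a factor of size `|x|` but raises `δ` by one. -/
lemma isBigO_iteratedFDeriv_brKernel (n k : ℕ) (hδ : 0 < δ) :
    iteratedFDeriv ℝ k (brKernel n δ) =O[⊤] fun x => (1 + ‖x‖) ^ (-brExp n δ) := by
  induction k using Nat.strong_induction_on generalizing δ with
  | _ k ih =>
  rcases k with _ | k
  · simpa only [← isBigO_norm_left (f' := iteratedFDeriv ℝ 0 _), norm_iteratedFDeriv_zero] using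
      (isBigO_brKernel n hδ).norm_left
  have hδ1 : 0 < δ + 1 := by linarith
  set L : (Euc n →L[ℝ] ℝ) →L[ℝ] ℂ →L[ℝ] (Euc n →L[ℝ] ℂ) :=
    ContinuousLinearMap.smulRightL ℝ (Euc n) ℂ
  set c : ℂ := -(2 * π ^ 2 / (δ + 1))
  have hfd : fderiv ℝ (brKernel n δ) =
      fun x => L (innerSL ℝ x) (c • brKernel n (δ + 1) x) := funext (fderiv_brKernel n hδ)
  have hK : ContDiff ℝ k (brKernel n (δ + 1)) :=
    (contDiff_brKernel n hδ1).of_le (by exact_mod_cast le_top)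
  have hinner (i : ℕ) : iteratedFDeriv ℝ i (fun x : Euc n => innerSL ℝ x) =O[⊤]
      fun x : Euc n => 1 + ‖x‖ :=
    isBigO_top.2 ⟨_, fun x => (norm_iteratedFDeriv_clm_le (innerSL ℝ : Euc n →L[ℝ] _) i x).trans
      (mul_le_mul_of_nonneg_left (le_abs_self _) (norm_nonneg _))⟩
  have hsmul (j : ℕ) (hj : j ≤ k) : iteratedFDeriv ℝ j (fun x => c • brKernel n (δ + 1) x) =O[⊤]
      fun x => (1 + ‖x‖) ^ (-brExp n (δ + 1)) := by
    refine ((ih j (by omega) hδ1).const_smul_left c).congr_left fun x => ?_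
    exact (iteratedFDeriv_const_smul_apply (hK.of_le (by exact_mod_cast hj)).contDiffAt).symm
  have hsum := IsBigO.fun_sum (s := Finset.range (k + 1)) fun i _ =>
    (((hinner i).norm_left.const_mul_left (k.choose i : ℝ)).mul
      (hsmul (k - i) (k.sub_le i)).norm_left).congr_right fun x =>
        (rpow_neg_brExp n δ (by positivity : 0 < 1 + ‖x‖)).symm
  refine IsBigO.trans (isBigO_top.2 ⟨‖L‖, fun x => ?_⟩) hsum
  rw [← norm_iteratedFDeriv_fderiv, hfd, Real.norm_of_nonneg (by positivity)]
  exact L.norm_iteratedFDeriv_le_of_bilinear (innerSL ℝ).contDiff (hK.const_smul c) x le_rfl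

lemma volume_brKernel_eq_zero (hn : 0 < n) (hδ : 0 < δ) :
    volume {x : Euc n | brKernel n δ x = 0} = 0 := by
  have : Nonempty (Fin n) := ⟨⟨0, hn⟩⟩
  obtain ⟨p, z, hosc, hK, hE⟩ := exists_brKernel_profile hn hδ
  set Z : Set ℝ := {r | 0 < r ∧ p r = 0}
  have hisolated (r : ℝ) (hr : r ∈ Z) : 𝓝[Z ∩ Ioi r] r = ⊥ := by
    have hz : z r ≠ 0 := fun hz => (hE r hr.1).ne' (by simp [OscSystem.energy, hr.2, hz])
    have hne := (hosc.hasDerivAt_fst r hr.1).eventually_ne (c := 0)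
      (by simp [hr.2, hz, Real.pi_ne_zero])
    refine empty_mem_iff_bot.1 ?_
    filter_upwards [nhdsWithin_mono r (fun s hs => ne_of_gt hs.2) hne, self_mem_nhdsWithin]
      with s hs hsZ using hs hsZ.1.2
  have hcount : Z.Countable :=
    countable_setOfPred_isolated_right_within.mono fun r hr => mem_sep hr (hisolated r hr)
  refine measure_mono_null (t := {0} ∪ ⋃ r ∈ Z, Metric.sphere 0 r) (fun x hx => ?_)
    (measure_union_null (measure_singleton 0) ((measure_biUnion_null_iff hcount).2
      fun r _ => Measure.addHaar_sphere _ _ _))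
  rcases eq_or_ne x 0 with rfl | h0
  · exact .inl rfl
  · have hx0 : 0 < ‖x‖ := norm_pos_iff.2 h0
    have hp := (smul_eq_zero.1 ((hK x h0).symm.trans hx)).resolve_left (by positivity)
    exact .inr (mem_iUnion₂.2 ⟨‖x‖, ⟨hx0, hp⟩, by simp⟩)

end Asymptotics

/-! ### Points at which the convolution integral converges -/

section Integrability

open Filter Topology Bornology

/-- Measurability of `f` is not assumed: where the weight `W` lives, `f` is recovered as
`(k̄₁ (k₁ f) + k̄₂ (k₂ f)) / (|k₁|² + |k₂|²)`. -/
lemma integrableOn_smul_of_integrable_mul {α 𝕜 : Type*} [MeasurableSpace α] {μ : Measure α}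
    [RCLike 𝕜] {k₁ k₂ f : α → 𝕜} {W : α → ℝ} {c : ℝ} (hk₁ : Measurable k₁) (hk₂ : Measurable k₂)
    (hW : Measurable W) (hc : 0 < c) (h₁ : Integrable (fun y => k₁ y * f y) μ)
    (h₂ : Integrable (fun y => k₂ y * f y) μ) :
    IntegrableOn (fun y => W y • f y) {y | c * |W y| ≤ ‖k₁ y‖ + ‖k₂ y‖} μ := by
  have hU : MeasurableSet {y | c * |W y| ≤ ‖k₁ y‖ + ‖k₂ y‖} := by measurability
  set Q : α → ℝ := fun y => ‖k₁ y‖ ^ 2 + ‖k₂ y‖ ^ 2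
  set F : α → 𝕜 := fun y => W y • (Q y)⁻¹ •
    (starRingEnd 𝕜 (k₁ y) * (k₁ y * f y) + starRingEnd 𝕜 (k₂ y) * (k₂ y * f y))
  have hQ (y : α) : ((Q y : ℝ) : 𝕜) * f y =
      starRingEnd 𝕜 (k₁ y) * (k₁ y * f y) + starRingEnd 𝕜 (k₂ y) * (k₂ y * f y) := by
    rw [← mul_assoc, ← mul_assoc, RCLike.conj_mul, RCLike.conj_mul, ← add_mul]
    norm_cast
  have hFm : AEStronglyMeasurable F μ := by
    have hconj := (RCLike.continuous_conj (K := 𝕜)).measurable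
    have hQm : Measurable Q := by fun_prop
    exact hW.aestronglyMeasurable.smul (hQm.inv.aestronglyMeasurable.smul
      (((hconj.comp hk₁).aestronglyMeasurable.mul h₁.1).add
        ((hconj.comp hk₂).aestronglyMeasurable.mul h₂.1)))
  have hFf : ∀ᵐ y ∂μ.restrict {y | c * |W y| ≤ ‖k₁ y‖ + ‖k₂ y‖}, F y = W y • f y := by
    filter_upwards [ae_restrict_mem hU] with y hy
    rcases eq_or_ne (W y) 0 with hWy | hWy
    · simp [F, hWy]
    · have hpos : 0 < ‖k₁ y‖ + ‖k₂ y‖ := (mul_pos hc (abs_pos.2 hWy)).trans_le hy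
      have hQ0 : Q y ≠ 0 := by simp only [Q]; nlinarith [sq_nonneg (‖k₁ y‖ - ‖k₂ y‖)]
      simp only [F, ← hQ, ← RCLike.real_smul_eq_coe_mul, inv_smul_smul₀ hQ0]
  refine Integrable.mono' ((h₁.norm.add h₂.norm).const_mul c⁻¹).restrict
    (hFm.restrict.congr hFf) ?_
  filter_upwards [ae_restrict_mem hU] with y hy
  have hmul := mul_le_mul_of_nonneg_right hy (norm_nonneg (f y))
  rw [norm_smul, Real.norm_eq_abs, ← div_eq_inv_mul, le_div_iff₀' hc]
  simpa only [Pi.add_apply, norm_mul, mul_assoc, add_mul] using hmul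

lemma integrableAtFilter_of_comap_nhds {α X E : Type*} [MeasurableSpace α] {μ : Measure α}
    [TopologicalSpace X] [NormedAddCommGroup E] {g : α → E} {l : Filter α} {u : α → X} {K : Set X}
    (hK : IsCompact K) (hu : ∀ᶠ y in l, u y ∈ K)
    (hg : ∀ θ ∈ K, IntegrableAtFilter g (l ⊓ comap u (𝓝 θ)) μ) : IntegrableAtFilter g l μ := by
  suffices hK' : IntegrableAtFilter g (l ⊓ 𝓟 (u ⁻¹' K)) μ from
    hK'.filter_mono (le_inf le_rfl (le_principal_iff.2 hu))
  refine hK.induction_on (p := fun t => IntegrableAtFilter g (l ⊓ 𝓟 (u ⁻¹' t)) μ) ?_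
    (fun s t hst ht => ht.filter_mono (inf_le_inf_left _ (by gcongr)))
    (fun s t hs ht => ?_) fun θ hθ => ?_
  · exact ⟨∅, by simp, integrableOn_empty⟩
  · rw [preimage_union, ← sup_principal, inf_sup_left]
    exact IntegrableAtFilter.sup_iff.2 ⟨hs, ht⟩
  · obtain ⟨s, hs, hgs⟩ := hg θ hθ
    obtain ⟨s₁, hs₁, s₂, ⟨t, ht, hts⟩, rfl⟩ := mem_inf_iff.1 hs
    exact ⟨t, mem_nhdsWithin_of_mem_nhds ht, s₁ ∩ s₂,
      inter_mem_inf hs₁ (mem_principal.2 hts), hgs⟩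

section InnerProductSpace

variable {V : Type*} [NormedAddCommGroup V] [InnerProductSpace ℝ V]

/-- The filter of neighbourhoods of infinity in the direction of the unit vector `θ`. -/
def coboundedDir (θ : V) : Filter V := cobounded V ⊓ comap (fun y => ‖y‖⁻¹ • y) (𝓝 θ)

/-- Divide `‖x - y‖² - ‖y‖² = ‖x‖² - 2⟪x, y⟫` by `‖x - y‖ + ‖y‖`. -/
lemma tendsto_norm_sub_sub_norm (x : V) {θ : V} (hθ : ‖θ‖ = 1) :
    Tendsto (fun y => ‖x - y‖ - ‖y‖) (coboundedDir θ) (𝓝 (-inner ℝ x θ)) := by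
  have hnorm : Tendsto (fun y : V => ‖y‖) (coboundedDir θ) atTop :=
    tendsto_norm_cobounded_atTop.mono_left inf_le_left
  have hdir : Tendsto (fun y : V => ‖y‖⁻¹ • y) (coboundedDir θ) (𝓝 θ) :=
    tendsto_comap.mono_left inf_le_right
  have hden := ((hnorm.inv_tendsto_atTop.smul_const x).sub hdir).norm.add_const 1
  have hnum := (hnorm.inv_tendsto_atTop.mul_const (‖x‖ ^ 2)).sub
    (((tendsto_const_nhds (x := x)).inner (𝕜 := ℝ) hdir).const_mul 2)
  have hlim := hnum.div hden (by positivity)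
  rw [zero_smul, zero_sub, norm_neg, hθ, zero_mul, zero_sub, one_add_one_eq_two, neg_div,
    mul_div_cancel_left₀ _ two_ne_zero] at hlim
  refine hlim.congr' ?_
  filter_upwards [hnorm.eventually_gt_atTop 0] with y hy
  have hscale : ‖‖y‖⁻¹ • x - ‖y‖⁻¹ • y‖ = ‖y‖⁻¹ * ‖x - y‖ := by
    rw [← smul_sub, norm_smul, norm_inv, norm_norm]
  have hsq := norm_sub_sq_real x y
  simp only [Pi.div_apply, Pi.inv_apply, inner_smul_right]
  rw [hscale, div_eq_iff (by positivity)]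
  field_simp
  linear_combination -hsq

lemma tendsto_norm_sub_sub_norm_sub (x x' : V) {θ : V} (hθ : ‖θ‖ = 1) :
    Tendsto (fun y => ‖x - y‖ - ‖x' - y‖) (coboundedDir θ) (𝓝 (-inner ℝ (x - x') θ)) := by
  have hlim := (tendsto_norm_sub_sub_norm x hθ).sub (tendsto_norm_sub_sub_norm x' hθ)
  simpa only [sub_sub_sub_cancel_right, inner_sub_left, neg_sub_neg, neg_sub] using hlim

variable [MeasurableSpace V] [BorelSpace V] [FiniteDimensional ℝ V]

lemma addHaar_setOf_inner_eq (μ : Measure V) [μ.IsAddHaarMeasure] {θ : V} (hθ : θ ≠ 0) (c : ℝ) :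
    μ {x | inner ℝ x θ = c} = 0 := by
  rcases eq_empty_or_nonempty {x | inner ℝ x θ = c} with h | ⟨x₀, hx₀ : inner ℝ x₀ θ = c⟩
  · rw [h, measure_empty]
  have hker : (innerSL ℝ θ).ker ≠ ⊤ := fun h =>
    hθ (inner_self_eq_zero.1 (h ▸ Submodule.mem_top : θ ∈ (innerSL ℝ θ).ker))
  have hpre : {x | inner ℝ x θ = c} = (fun x => x + -x₀) ⁻¹' (innerSL ℝ θ).ker := by
    ext x
    change _ ↔ inner ℝ θ (x + -x₀) = 0
    rw [real_inner_comm, ← sub_eq_add_neg, inner_sub_left, hx₀, sub_eq_zero]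
    rfl
  rw [hpre, measure_preimage_add_right, Measure.addHaar_submodule μ _ hker]

lemma exists_sin_inner_sub_ne_zero {μ : Measure V} [μ.IsAddHaarMeasure] {S : Set V} (hS : μ S ≠ 0)
    {θ : V} (hθ : θ ≠ 0) : ∃ x ∈ S, ∃ x' ∈ S, Real.sin (2 * π * inner ℝ (x - x') θ) ≠ 0 := by
  obtain ⟨x', hx'⟩ := nonempty_of_measure_ne_zero hS
  by_contra! hcon
  refine hS (measure_mono_null (t := ⋃ k : ℤ, {x | inner ℝ x θ = inner ℝ x' θ + k / 2})
    (fun x hx => ?_) (measure_iUnion_null fun k => addHaar_setOf_inner_eq μ hθ _))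
  obtain ⟨k, hk⟩ := Real.sin_eq_zero_iff.1 (hcon x hx x' hx')
  refine mem_iUnion.2 ⟨k, ?_⟩
  rw [inner_sub_left] at hk
  have hk' := mul_right_cancel₀ Real.pi_ne_zero
    (hk.trans (by ring : _ = 2 * (inner ℝ x θ - inner ℝ x' θ) * π))
  change inner ℝ x θ = _
  linarith

end InnerProductSpace

variable {n : ℕ} {δ : ℝ}

/-- The phases of `K(x - y)` and `K(x' - y)` differ by about `2π ⟪x - x', θ⟫` for `y` far away in
the direction `θ`, so the two are not small together. -/
lemma exists_eventually_le_norm_brKernel_add (hn : 0 < n) (hδ : 0 < δ) {x x' θ : Euc n}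
    (hθ : ‖θ‖ = 1) (hsin : Real.sin (2 * π * inner ℝ (x - x') θ) ≠ 0) :
    ∃ c : ℝ, 0 < c ∧ ∀ᶠ y in coboundedDir θ,
      c * (1 + ‖y‖) ^ (-brExp n δ) ≤ ‖brKernel n δ (x - y)‖ + ‖brKernel n δ (x' - y)‖ := by
  obtain ⟨p, z, hosc, hK, hE⟩ := exists_brKernel_profile hn hδ
  have ha := brExp_pos n hδ
  obtain ⟨ε, B, hε, hbound⟩ := hosc.exists_amplitude_bounds ha (hE _ ha)
  have hnorm : Tendsto (fun y : Euc n => ‖y‖) (coboundedDir θ) atTop :=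
    tendsto_norm_cobounded_atTop.mono_left inf_le_left
  have hsub (v : Euc n) : Tendsto (fun y => ‖v - y‖) (coboundedDir θ) atTop :=
    tendsto_atTop_mono (fun y => (norm_sub_norm_le y v).trans_eq (norm_sub_rev y v))
      (tendsto_atTop_add_const_right _ (-‖v‖) hnorm)
  have hfar (v : Euc n) : ∀ᶠ y in coboundedDir θ,
      2 ^ (-brExp n δ) * (1 + ‖y‖) ^ (-brExp n δ) * ‖p ‖v - y‖‖ ≤ ‖brKernel n δ (v - y)‖ := by
    filter_upwards [hnorm.eventually_ge_atTop ‖v‖, (hsub v).eventually_gt_atTop 0] with y hy hpos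
    rw [hK _ (norm_pos_iff.1 hpos), norm_smul, Real.norm_of_nonneg (by positivity),
      ← Real.mul_rpow two_pos.le (by positivity)]
    gcongr ?_ * _
    exact Real.rpow_le_rpow_of_nonpos hpos ((norm_sub_le v y).trans (by linarith)) (by linarith)
  obtain ⟨c, hc, hlow⟩ := hosc.exists_eventually_le_norm_add_norm ha.le hε
    (fun t ht => (hbound t ht).2) (fun t ht => (hbound t ht).1) (hsub x) (hsub x')
    (tendsto_norm_sub_sub_norm_sub x x' hθ) (by rwa [mul_neg, Real.sin_neg, neg_ne_zero])
  refine ⟨2 ^ (-brExp n δ) * c, by positivity, ?_⟩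
  filter_upwards [hlow, hfar x, hfar x'] with y hy hx hx'
  calc 2 ^ (-brExp n δ) * c * (1 + ‖y‖) ^ (-brExp n δ)
      = 2 ^ (-brExp n δ) * (1 + ‖y‖) ^ (-brExp n δ) * c := by ring
    _ ≤ 2 ^ (-brExp n δ) * (1 + ‖y‖) ^ (-brExp n δ) * (‖p ‖x - y‖‖ + ‖p ‖x' - y‖‖) := by gcongr
    _ ≤ ‖brKernel n δ (x - y)‖ + ‖brKernel n δ (x' - y)‖ := by
        rw [mul_add]
        exact add_le_add hx hx'

section Dichotomy

variable {f : Euc n → ℂ}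
  (hS : volume {x : Euc n | Integrable fun y => brKernel n δ (x - y) * f y} ≠ 0)
include hS

lemma locallyIntegrable_weight_smul (hn : 0 < n) (hδ : 0 < δ) :
    LocallyIntegrable fun y : Euc n => (1 + ‖y‖) ^ (-brExp n δ) • f y := by
  have hK := continuous_brKernel n hδ
  intro y₀
  obtain ⟨x, hx, hne⟩ : ∃ x, (Integrable fun y => brKernel n δ (x - y) * f y) ∧
      brKernel n δ (x - y₀) ≠ 0 := by
    by_contra! hcon
    refine hS (measure_mono_null (t := (fun x => x + -y₀) ⁻¹' {x | brKernel n δ x = 0})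
      (fun x hx => ?_) (by rw [measure_preimage_add_right, volume_brKernel_eq_zero hn hδ]))
    change brKernel n δ (x + -y₀) = 0
    rw [← sub_eq_add_neg]
    exact hcon x hx
  have hpos : 0 < ‖brKernel n δ (x - y₀)‖ := norm_pos_iff.2 hne
  have hnear : ∀ᶠ y in 𝓝 y₀, ‖brKernel n δ (x - y₀)‖ / 2 ≤ ‖brKernel n δ (x - y)‖ :=
    ((by fun_prop : Continuous fun y => ‖brKernel n δ (x - y)‖).tendsto y₀).eventually_const_le
      (half_lt_self hpos)
  have hKm : Measurable fun y => brKernel n δ (x - y) := by fun_prop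
  refine ⟨_, ?_, integrableOn_smul_of_integrable_mul (c := ‖brKernel n δ (x - y₀)‖ / 2) hKm hKm
    (by fun_prop) (half_pos hpos) hx hx⟩
  filter_upwards [hnear] with y hy
  have hW : |(1 + ‖y‖) ^ (-brExp n δ)| ≤ 1 := by
    rw [abs_of_nonneg (by positivity)]
    exact Real.rpow_le_one_of_one_le_of_nonpos (le_add_of_nonneg_right (norm_nonneg y))
      (neg_nonpos.2 (brExp_pos n hδ).le)
  exact (mul_le_of_le_one_right (by positivity) hW).trans
    (hy.trans (le_add_of_nonneg_right (norm_nonneg _)))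

lemma integrableAtFilter_cobounded_weight_smul (hn : 0 < n) (hδ : 0 < δ) :
    IntegrableAtFilter (fun y : Euc n => (1 + ‖y‖) ^ (-brExp n δ) • f y) (cobounded (Euc n)) := by
  have hK := continuous_brKernel n hδ
  have hunit : ∀ᶠ y : Euc n in cobounded (Euc n), ‖y‖⁻¹ • y ∈ Metric.sphere (0 : Euc n) 1 := by
    filter_upwards [tendsto_norm_cobounded_atTop.eventually_gt_atTop 0] with y hy
    simp [norm_smul, hy.ne']
  refine integrableAtFilter_of_comap_nhds (isCompact_sphere 0 1) hunit fun θ hθ => ?_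
  have hθ1 : ‖θ‖ = 1 := by simpa using hθ
  obtain ⟨x, hx, x', hx', hsin⟩ := exists_sin_inner_sub_ne_zero hS
    (norm_ne_zero_iff.1 (hθ1.trans_ne one_ne_zero))
  obtain ⟨c, hc, hlow⟩ := exists_eventually_le_norm_brKernel_add hn hδ hθ1 hsin
  refine ⟨_, ?_, integrableOn_smul_of_integrable_mul (c := c) (by fun_prop) (by fun_prop)
    (by fun_prop) hc hx hx'⟩
  filter_upwards [hlow] with y hy
  simpa only [abs_of_nonneg (by positivity : 0 ≤ (1 + ‖y‖) ^ (-brExp n δ))] using hy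

end Dichotomy

lemma ae_not_integrable_or_integrable_weight_smul (hn : 0 < n) (hδ : 0 < δ) (f : Euc n → ℂ) :
    (∀ᵐ x : Euc n, ¬ Integrable fun y => brKernel n δ (x - y) * f y) ∨
      Integrable fun y : Euc n => (1 + ‖y‖) ^ (-brExp n δ) • f y := by
  refine or_iff_not_imp_left.2 fun hS => ?_
  rw [ae_iff] at hS
  simp only [not_not] at hS
  refine integrable_iff_integrableAtFilter_cocompact.2
    ⟨?_, locallyIntegrable_weight_smul hS hn hδ⟩
  rw [← Metric.cobounded_eq_cocompact]
  exact integrableAtFilter_cobounded_weight_smul hS hn hδ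

end Integrability

/-! ### Coordinate derivatives -/

section CoordinateDerivatives

open scoped ContDiff

variable {n : ℕ} {f : Euc n → ℂ}

/-- The iterated partial derivative of `f` along the coordinates listed in `L`, the last one being
applied first. -/
def wordDeriv (L : List (Fin n)) (f : Euc n → ℂ) : Euc n → ℂ :=
  L.foldr pderiv' f

lemma wordDeriv_append (L L' : List (Fin n)) (f : Euc n → ℂ) :
    wordDeriv (L ++ L') f = wordDeriv L (wordDeriv L' f) :=
  List.foldr_append

lemma wordDeriv_replicate (k : ℕ) (i : Fin n) (f : Euc n → ℂ) :
    wordDeriv (List.replicate k i) f = (pderiv' i)^[k] f := by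
  induction k with
  | zero => rfl
  | succ k ih =>
    rw [List.replicate_succ, Function.iterate_succ_apply', ← ih]
    rfl

/-- The sorted word spelling the multi-index `α`. -/
def multiWord (α : Fin n → ℕ) : List (Fin n) :=
  (List.finRange n).flatMap fun i => List.replicate (α i) i

lemma mderiv_eq_wordDeriv (α : Fin n → ℕ) (f : Euc n → ℂ) :
    mderiv α f = wordDeriv (multiWord α) f := by
  unfold mderiv multiWord
  induction List.finRange n with
  | nil => rfl
  | cons i M ih =>
    rw [List.flatMap_cons, wordDeriv_append, ← ih, wordDeriv_replicate]
    rfl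

lemma length_multiWord (α : Fin n → ℕ) : (multiWord α).length = ∑ i, α i := by
  simp [multiWord, List.length_flatMap, Fin.sum_univ_def]

lemma perm_multiWord (L : List (Fin n)) : L.Perm (multiWord fun i => L.count i) := by
  refine List.perm_iff_count.2 fun a => ?_
  rw [multiWord, List.count_flatMap, ← Fin.sum_univ_def]
  simp [List.count_replicate]

lemma contDiff_wordDeriv (hf : ContDiff ℝ ∞ f) (L : List (Fin n)) :
    ContDiff ℝ ∞ (wordDeriv L f) := by
  induction L with
  | nil => exact hf
  | cons i L ih => exact (ih.fderiv_right (m := ∞) (by simp)).clm_apply contDiff_const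

lemma pderiv'_comm (hf : ContDiff ℝ ∞ f) (i j : Fin n) :
    pderiv' i (pderiv' j f) = pderiv' j (pderiv' i f) := by
  have hd : Differentiable ℝ (fderiv ℝ f) :=
    (hf.fderiv_right (m := ∞) (by simp)).differentiable (by simp)
  have hsnd (i j : Fin n) (x : Euc n) : pderiv' i (pderiv' j f) x =
      fderiv ℝ (fderiv ℝ f) x (EuclideanSpace.single i 1) (EuclideanSpace.single j 1) := by
    unfold pderiv'
    rw [fderiv_clm_apply (hd x) (by fun_prop)]
    simp
  funext x
  rw [hsnd, hsnd]
  exact (contDiff_infty.1 hf 2).contDiffAt.isSymmSndFDerivAt (by simp) _ _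

lemma wordDeriv_perm (hf : ContDiff ℝ ∞ f) {L L' : List (Fin n)} (h : L.Perm L') :
    wordDeriv L f = wordDeriv L' f := by
  induction h with
  | nil => rfl
  | cons i _ ih => exact congrArg (pderiv' i) ih
  | swap i j L => exact pderiv'_comm (contDiff_wordDeriv hf L) j i
  | trans _ _ h₁ h₂ => exact h₁.trans h₂

lemma wordDeriv_ofFn (hf : ContDiff ℝ ∞ f) (k : ℕ) (j : Fin k → Fin n) (x : Euc n) :
    wordDeriv (List.ofFn j) f x =
      iteratedFDeriv ℝ k f x fun i => EuclideanSpace.single (j i) 1 := by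
  induction k generalizing x with
  | zero => simp [wordDeriv]
  | succ k ih =>
    have htail : wordDeriv (List.ofFn (Fin.tail j)) f =
        fun y => iteratedFDeriv ℝ k f y fun i => EuclideanSpace.single (j i.succ) 1 :=
      funext fun y => ih _ y
    have hdiff : DifferentiableAt ℝ (iteratedFDeriv ℝ k f) x :=
      hf.differentiable_iteratedFDeriv (by exact_mod_cast ENat.natCast_lt_top k) x
    rw [List.ofFn_succ, iteratedFDeriv_succ_apply_left]
    change fderiv ℝ (wordDeriv (List.ofFn (Fin.tail j)) f) x _ = _
    rw [htail]
    exact DFunLike.congr_fun ((ContinuousMultilinearMap.apply ℝ (fun _ : Fin k => Euc n) ℂ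
      fun i => EuclideanSpace.single (j i.succ) 1).hasFDerivAt.comp x hdiff.hasFDerivAt).fderiv _

lemma norm_mderiv_le (hf : ContDiff ℝ ∞ f) (α : Fin n → ℕ) (x : Euc n) :
    ‖mderiv α f x‖ ≤ ‖iteratedFDeriv ℝ (∑ i, α i) f x‖ := by
  have hword := wordDeriv_ofFn hf _ (multiWord α).get x
  rw [List.ofFn_get] at hword
  rw [mderiv_eq_wordDeriv, ← length_multiWord α, hword]
  exact (ContinuousMultilinearMap.le_opNorm _ _).trans_eq (by simp)

lemma norm_iteratedFDeriv_single_le (hf : ContDiff ℝ ∞ f) {k : ℕ} {x : Euc n} {A : ℝ}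
    (h : ∀ α : Fin n → ℕ, ∑ i, α i = k → ‖mderiv α f x‖ ≤ A) (j : Fin k → Fin n) :
    ‖iteratedFDeriv ℝ k f x fun i => EuclideanSpace.single (j i) 1‖ ≤ A := by
  have hperm := perm_multiWord (List.ofFn j)
  rw [← wordDeriv_ofFn hf, wordDeriv_perm hf hperm, ← mderiv_eq_wordDeriv]
  exact h _ (by rw [← length_multiWord, ← hperm.length_eq, List.length_ofFn])

lemma norm_multilinear_le_of_norm_single_le {E : Type*} [NormedAddCommGroup E] [NormedSpace ℝ E]
    {k : ℕ} {A : ℝ} (hA : 0 ≤ A) (T : Euc n [×k]→L[ℝ] E)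
    (h : ∀ j : Fin k → Fin n, ‖T fun i => EuclideanSpace.single (j i) 1‖ ≤ A) :
    ‖T‖ ≤ (n : ℝ) ^ k * A := by
  refine ContinuousMultilinearMap.opNorm_le_bound (by positivity) fun m => ?_
  have hm : m = fun i => ∑ j, m i j • EuclideanSpace.single j (1 : ℝ) := by
    funext i
    ext l
    simp [Finset.sum_apply, Pi.single_apply]
  have hexp : T m = ∑ r : Fin k → Fin n, (∏ i, m i (r i)) •
      T fun i => EuclideanSpace.single (r i) 1 := by
    conv_lhs => rw [hm]
    simp_rw [ContinuousMultilinearMap.map_sum, ContinuousMultilinearMap.map_smul_univ]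
  calc ‖T m‖ ≤ ∑ _r : Fin k → Fin n, (∏ i, ‖m i‖) * A := by
        rw [hexp]
        refine norm_sum_le_of_le _ fun r _ => ?_
        rw [norm_smul, norm_prod]
        gcongr with i
        · exact PiLp.norm_apply_le (m i) (r i)
        · exact h r
    _ = (n : ℝ) ^ k * A * ∏ i, ‖m i‖ := by
        rw [Finset.sum_const, Finset.card_univ, Fintype.card_fun, Fintype.card_fin,
          Fintype.card_fin, nsmul_eq_mul]
        push_cast
        ring

end CoordinateDerivatives

/-! ### Convolution with an integrable function -/

section Convolution

universe u

variable {V E : Type u} [NormedAddCommGroup V] [NormedSpace ℝ V] [FiniteDimensional ℝ V]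
  [MeasurableSpace V] [BorelSpace V] {μ : Measure V} {B : V → ℂ}
  [NormedAddCommGroup E] [NormedSpace ℂ E] {g : V → E}

lemma integrable_smul_comp_sub (hB : Integrable B μ) (hg : Continuous g) {C : ℝ}
    (hC : ∀ x, ‖g x‖ ≤ C) (x : V) : Integrable (fun w => B w • g (x - w)) μ :=
  hB.smul_bdd C (hg.comp (continuous_sub_left x)).aestronglyMeasurable
    (.of_forall fun w => hC (x - w))

variable [NormedSpace ℝ E] [SMulCommClass ℝ ℂ E]

lemma hasFDerivAt_integral_smul_comp_sub (hB : Integrable B μ) (hg : ContDiff ℝ 1 g) {C C' : ℝ}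
    (hC : ∀ x, ‖g x‖ ≤ C) (hC' : ∀ x, ‖fderiv ℝ g x‖ ≤ C') (x : V) :
    HasFDerivAt (fun x => ∫ w, B w • g (x - w) ∂μ) (∫ w, B w • fderiv ℝ g (x - w) ∂μ) x := by
  have hint := integrable_smul_comp_sub hB hg.continuous hC
  refine hasFDerivAt_integral_of_dominated_of_fderiv_le
    (F' := fun x w => B w • fderiv ℝ g (x - w)) (bound := fun w => ‖B w‖ * C')
    Filter.univ_mem (.of_forall fun x => (hint x).1) (hint x)
    (integrable_smul_comp_sub hB (hg.continuous_fderiv one_ne_zero) hC' x).1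
    (.of_forall fun w x _ => ?_) (hB.norm.mul_const C') (.of_forall fun w x _ => ?_)
  · rw [norm_smul]
    gcongr
    exact hC' _
  · exact ((hg.differentiable one_ne_zero _).hasFDerivAt.comp x
      ((hasFDerivAt_id x).sub_const w)).const_smul (B w)

lemma contDiff_and_norm_iteratedFDeriv_integral_smul_comp_sub_le (hB : Integrable B μ) {k : ℕ}
    (hg : ContDiff ℝ k g) (hgb : ∀ j ≤ k, ∃ C, ∀ x, ‖iteratedFDeriv ℝ j g x‖ ≤ C) :
    ContDiff ℝ k (fun x => ∫ w, B w • g (x - w) ∂μ) ∧ ∀ x,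
      ‖iteratedFDeriv ℝ k (fun x => ∫ w, B w • g (x - w) ∂μ) x‖ ≤
        ∫ w, ‖B w‖ * ‖iteratedFDeriv ℝ k g (x - w)‖ ∂μ := by
  obtain ⟨C, hC⟩ := hgb 0 k.zero_le
  simp only [norm_iteratedFDeriv_zero] at hC
  induction k generalizing E C with
  | zero =>
    simp only [CharP.cast_eq_zero, contDiff_zero, norm_iteratedFDeriv_zero, ← norm_smul] at hg ⊢
    refine ⟨?_, fun x => norm_integral_le_integral_norm _⟩
    refine continuous_of_dominated (bound := fun w => ‖B w‖ * C)
      (fun x => (integrable_smul_comp_sub hB hg hC x).1) (fun x => .of_forall fun w => ?_)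
      (hB.norm.mul_const C) (.of_forall fun w => by fun_prop)
    rw [norm_smul]
    gcongr
    exact hC _
  | succ k ih =>
    have hgb' (j : ℕ) (hj : j ≤ k) : ∃ C, ∀ x, ‖iteratedFDeriv ℝ j (fderiv ℝ g) x‖ ≤ C := by
      simpa only [norm_iteratedFDeriv_fderiv] using hgb (j + 1) (by omega)
    obtain ⟨C', hC'⟩ := hgb' 0 k.zero_le
    simp only [norm_iteratedFDeriv_zero] at hC'
    have hderiv := hasFDerivAt_integral_smul_comp_sub hB (hg.of_le (by simp)) hC hC'
    obtain ⟨hsmooth, hle⟩ := ih (hg.fderiv_right (by simp)) hgb' C' hC'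
    have hfderiv : fderiv ℝ (fun x => ∫ w, B w • g (x - w) ∂μ) = _ :=
      funext fun x => (hderiv x).fderiv
    simp only [Nat.cast_add, Nat.cast_one, contDiff_succ_iff_fderiv, ← norm_iteratedFDeriv_fderiv]
    rw [hfderiv]
    exact ⟨⟨fun x => (hderiv x).differentiableAt, by simp, hsmooth⟩, hle⟩

end Convolution

/-! ### Polynomial weights -/

section Weight

lemma rpow_neg_le_mul_rpow_neg {X Y c b : ℝ} (hX : 0 < X) (hY : 0 < Y) (hc : 0 ≤ c) (hb : 0 ≤ b)
    (h : X ≤ c * Y) : Y ^ (-b) ≤ c ^ b * X ^ (-b) := by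
  have hXY : X ^ b ≤ c ^ b * Y ^ b :=
    (Real.rpow_le_rpow hX.le h hb).trans_eq (Real.mul_rpow hc hY.le)
  rw [Real.rpow_neg hX.le, Real.rpow_neg hY.le, ← div_eq_mul_inv, le_div_iff₀ (by positivity),
    inv_mul_le_iff₀ (by positivity)]
  exact hXY.trans_eq (mul_comm _ _)

/-- Whichever of `Q` and `τ P` is the larger one is at least `X / 2`. -/
lemma rpow_neg_mul_rpow_neg_le {X P Q τ b : ℝ} (hX : 0 < X) (hP : 0 < P) (hQ : 0 < Q) (hτ : 0 < τ)
    (hb : 0 ≤ b) (h : X ≤ Q + τ * P) :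
    P ^ (-b) * Q ^ (-b) ≤ 2 ^ b * X ^ (-b) * (P ^ (-b) + τ ^ b * Q ^ (-b)) := by
  rcases le_total (τ * P) Q with hPQ | hQP
  · calc P ^ (-b) * Q ^ (-b) ≤ P ^ (-b) * (2 ^ b * X ^ (-b)) := by
          gcongr
          exact rpow_neg_le_mul_rpow_neg hX hQ two_pos.le hb (by linarith)
      _ ≤ P ^ (-b) * (2 ^ b * X ^ (-b)) + τ ^ b * Q ^ (-b) * (2 ^ b * X ^ (-b)) :=
          le_add_of_nonneg_right (by positivity)
      _ = 2 ^ b * X ^ (-b) * (P ^ (-b) + τ ^ b * Q ^ (-b)) := by ring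
  · calc P ^ (-b) * Q ^ (-b) ≤ (2 * τ) ^ b * X ^ (-b) * Q ^ (-b) := by
          gcongr
          exact rpow_neg_le_mul_rpow_neg hX hP (by positivity) hb (by linarith)
      _ ≤ P ^ (-b) * (2 ^ b * X ^ (-b)) + (2 * τ) ^ b * X ^ (-b) * Q ^ (-b) :=
          le_add_of_nonneg_left (by positivity)
      _ = 2 ^ b * X ^ (-b) * (P ^ (-b) + τ ^ b * Q ^ (-b)) := by
          rw [Real.mul_rpow two_pos.le hτ.le]
          ring

section NormedGroup

variable {V : Type*} [NormedAddCommGroup V]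

lemma one_add_norm_rpow_neg_le_one {b : ℝ} (hb : 0 ≤ b) (x : V) : (1 + ‖x‖) ^ (-b) ≤ 1 :=
  Real.rpow_le_one_of_one_le_of_nonpos (le_add_of_nonneg_right (norm_nonneg x)) (neg_nonpos.2 hb)

lemma one_add_norm_le_mul (x y : V) : 1 + ‖y‖ ≤ (1 + ‖x‖) * (1 + ‖x - y‖) := by
  have htri : ‖y‖ ≤ ‖x‖ + ‖x - y‖ := by simpa using norm_sub_le x (x - y)
  nlinarith [mul_nonneg (norm_nonneg x) (norm_nonneg (x - y))]

lemma continuous_one_add_norm_rpow (b : ℝ) : Continuous fun x : V => (1 + ‖x‖) ^ b :=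
  Continuous.rpow_const (by fun_prop) fun x => Or.inl (by positivity)

variable [MeasurableSpace V] {μ : Measure V} {f G : V → ℂ} {a : ℝ}

lemma aestronglyMeasurable_of_integrable_weight_smul [OpensMeasurableSpace V]
    (hf : Integrable (fun y => (1 + ‖y‖) ^ (-a) • f y) μ) : AEStronglyMeasurable f μ := by
  have hmeas : AEStronglyMeasurable (fun y => (1 + ‖y‖) ^ a • ((1 + ‖y‖) ^ (-a) • f y)) μ :=
    (continuous_one_add_norm_rpow a).measurable.aestronglyMeasurable.smul hf.1
  refine hmeas.congr (.of_forall fun y => ?_)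
  simp only [smul_smul, ← Real.rpow_add (by positivity : 0 < 1 + ‖y‖), add_neg_cancel,
    Real.rpow_zero, one_smul]

end NormedGroup

variable {n : ℕ} {b : ℝ}

lemma norm_dil (g : Euc n → ℂ) {t : ℝ} (ht : 0 < t) (x : Euc n) :
    ‖dil g t x‖ = (t ^ n)⁻¹ * ‖g (t⁻¹ • x)‖ := by
  rw [dil, norm_smul, Real.norm_of_nonneg (by positivity)]

lemma continuous_dil {g : Euc n → ℂ} (hg : Continuous g) (t : ℝ) : Continuous (dil g t) := by
  unfold dil
  fun_prop

lemma norm_dil_sub_le {G : Euc n → ℂ} {r C : ℝ} (hr : 0 ≤ r)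
    (hG : ∀ u, ‖G u‖ ≤ C * (1 + ‖u‖) ^ (-r)) {t : ℝ} (ht : 0 < t) (x y : Euc n) :
    ‖dil G t (x - y)‖ ≤ (t ^ n)⁻¹ * C * ((1 + ‖x‖) * (1 + t)) ^ r * (1 + ‖y‖) ^ (-r) := by
  have hC : 0 ≤ C := by simpa using (norm_nonneg _).trans (hG 0)
  set u := t⁻¹ • (x - y) with hu
  have hxy : x - y = t • u := by rw [hu, smul_inv_smul₀ ht.ne']
  have hle : 1 + ‖y‖ ≤ ((1 + ‖x‖) * (1 + t)) * (1 + ‖u‖) := by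
    refine (one_add_norm_le_mul x y).trans ?_
    rw [mul_assoc, hxy, norm_smul, Real.norm_of_nonneg ht.le]
    gcongr
    nlinarith [norm_nonneg u]
  calc ‖dil G t (x - y)‖ ≤ (t ^ n)⁻¹ * (C * (1 + ‖u‖) ^ (-r)) := by
        rw [norm_dil G ht]
        gcongr
        exact hG u
    _ ≤ (t ^ n)⁻¹ * (C * (((1 + ‖x‖) * (1 + t)) ^ r * (1 + ‖y‖) ^ (-r))) := by
        gcongr
        exact rpow_neg_le_mul_rpow_neg (by positivity) (by positivity) (by positivity) hr hle
    _ = (t ^ n)⁻¹ * C * ((1 + ‖x‖) * (1 + t)) ^ r * (1 + ‖y‖) ^ (-r) := by ring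

lemma integrable_weight (hb : (n : ℝ) < b) : Integrable fun x : Euc n => (1 + ‖x‖) ^ (-b) :=
  integrable_one_add_norm (by simpa using hb)

lemma integrable_dil_weight (hb : (n : ℝ) < b) {τ : ℝ} (hτ : 0 < τ) :
    Integrable fun w : Euc n => (τ ^ n)⁻¹ * (1 + ‖τ⁻¹ • w‖) ^ (-b) :=
  ((integrable_weight hb).comp_smul (inv_ne_zero hτ.ne')).const_mul _

lemma integral_dil_weight (b : ℝ) {τ : ℝ} (hτ : 0 < τ) :
    ∫ w : Euc n, (τ ^ n)⁻¹ * (1 + ‖τ⁻¹ • w‖) ^ (-b) = ∫ w : Euc n, (1 + ‖w‖) ^ (-b) := by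
  rw [integral_const_mul,
    Measure.integral_comp_inv_smul_of_nonneg volume (fun w : Euc n => (1 + ‖w‖) ^ (-b)) hτ.le,
    finrank_euclideanSpace_fin, smul_eq_mul, inv_mul_cancel_left₀ (pow_pos hτ n).ne']

lemma dil_weight_mul_weight_le (hb : (n : ℝ) < b) {τ : ℝ} (hτ : 0 < τ) (hτ1 : τ ≤ 1)
    (x w : Euc n) :
    (τ ^ n)⁻¹ * (1 + ‖τ⁻¹ • w‖) ^ (-b) * (1 + ‖x - w‖) ^ (-b) ≤
      2 ^ b * (1 + ‖x‖) ^ (-b) *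
        ((τ ^ n)⁻¹ * (1 + ‖τ⁻¹ • w‖) ^ (-b) + (1 + ‖x - w‖) ^ (-b)) := by
  have hsum : 1 + ‖x‖ ≤ (1 + ‖x - w‖) + τ * (1 + ‖τ⁻¹ • w‖) := by
    have htri : ‖x‖ ≤ ‖x - w‖ + ‖w‖ := by simpa using norm_add_le (x - w) w
    rw [norm_smul, norm_inv, Real.norm_of_nonneg hτ.le, mul_add, mul_inv_cancel_left₀ hτ.ne']
    linarith
  have hτb : (τ ^ n)⁻¹ * τ ^ b ≤ 1 := by
    rw [inv_mul_le_iff₀ (by positivity), mul_one, ← Real.rpow_natCast]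
    exact Real.rpow_le_rpow_of_exponent_ge hτ hτ1 hb.le
  have hQ : 0 ≤ (1 + ‖x - w‖) ^ (-b) := by positivity
  calc (τ ^ n)⁻¹ * (1 + ‖τ⁻¹ • w‖) ^ (-b) * (1 + ‖x - w‖) ^ (-b)
      = (τ ^ n)⁻¹ * ((1 + ‖τ⁻¹ • w‖) ^ (-b) * (1 + ‖x - w‖) ^ (-b)) := mul_assoc _ _ _
    _ ≤ (τ ^ n)⁻¹ * (2 ^ b * (1 + ‖x‖) ^ (-b) *
          ((1 + ‖τ⁻¹ • w‖) ^ (-b) + τ ^ b * (1 + ‖x - w‖) ^ (-b))) := by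
        refine mul_le_mul_of_nonneg_left ?_ (by positivity)
        exact rpow_neg_mul_rpow_neg_le (by positivity) (by positivity) (by positivity) hτ
          (n.cast_nonneg.trans hb.le) hsum
    _ = 2 ^ b * (1 + ‖x‖) ^ (-b) * ((τ ^ n)⁻¹ * (1 + ‖τ⁻¹ • w‖) ^ (-b) +
          (τ ^ n)⁻¹ * τ ^ b * (1 + ‖x - w‖) ^ (-b)) := by ring
    _ ≤ _ := by
        gcongr
        exact mul_le_of_le_one_left hQ hτb

lemma integrable_dil_weight_mul_weight (hb : (n : ℝ) < b) {τ : ℝ} (hτ : 0 < τ) (x : Euc n) :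
    Integrable fun w : Euc n => (τ ^ n)⁻¹ * (1 + ‖τ⁻¹ • w‖) ^ (-b) * (1 + ‖x - w‖) ^ (-b) := by
  refine (integrable_dil_weight hb hτ).mul_bdd (c := 1)
    ((continuous_one_add_norm_rpow (-b)).comp (continuous_sub_left x)).aestronglyMeasurable
    (.of_forall fun w => ?_)
  rw [Real.norm_of_nonneg (by positivity)]
  exact one_add_norm_rpow_neg_le_one (n.cast_nonneg.trans hb.le) _

lemma integral_dil_weight_mul_weight_le (hb : (n : ℝ) < b) {τ : ℝ} (hτ : 0 < τ) (hτ1 : τ ≤ 1)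
    (x : Euc n) :
    ∫ w : Euc n, (τ ^ n)⁻¹ * (1 + ‖τ⁻¹ • w‖) ^ (-b) * (1 + ‖x - w‖) ^ (-b) ≤
      2 ^ (b + 1) * (∫ w : Euc n, (1 + ‖w‖) ^ (-b)) * (1 + ‖x‖) ^ (-b) := by
  have hdil := integrable_dil_weight hb hτ
  have hsub : Integrable fun w : Euc n => (1 + ‖x - w‖) ^ (-b) :=
    (integrable_weight hb).comp_sub_left x
  calc _ ≤ ∫ w : Euc n, 2 ^ b * (1 + ‖x‖) ^ (-b) *
        ((τ ^ n)⁻¹ * (1 + ‖τ⁻¹ • w‖) ^ (-b) + (1 + ‖x - w‖) ^ (-b)) :=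
        integral_mono (integrable_dil_weight_mul_weight hb hτ x) ((hdil.add hsub).const_mul _)
          (dil_weight_mul_weight_le hb hτ hτ1 x)
    _ = 2 ^ (b + 1) * (∫ w : Euc n, (1 + ‖w‖) ^ (-b)) * (1 + ‖x‖) ^ (-b) := by
        rw [integral_const_mul, integral_add hdil hsub, integral_dil_weight b hτ,
          integral_sub_left_eq_self (fun w : Euc n => (1 + ‖w‖) ^ (-b)),
          Real.rpow_add_one two_ne_zero]
        ring

end Weight

/-! ### Smoothing the kernel by a test function -/

section Smoothing

open scoped ContDiff

variable {n M N : ℕ} {b δ : ℝ}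

/-- `DecayBound M b A η`: the function `η` is smooth, and its derivatives of order at most `M` are
bounded by `A (1 + |x|)^{-b}`. -/
structure DecayBound (M : ℕ) (b A : ℝ) (η : Euc n → ℂ) : Prop where
  smooth : ContDiff ℝ ∞ η
  bound : ∀ k ≤ M, ∀ x, ‖iteratedFDeriv ℝ k η x‖ ≤ A * (1 + ‖x‖) ^ (-b)

namespace DecayBound

variable {A A' : ℝ} {η : Euc n → ℂ}

lemma norm_le (h : DecayBound M b A η) (x : Euc n) : ‖η x‖ ≤ A * (1 + ‖x‖) ^ (-b) := by
  simpa only [norm_iteratedFDeriv_zero] using h.bound 0 M.zero_le x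

lemma nonneg (h : DecayBound M b A η) : 0 ≤ A := by
  simpa using (norm_nonneg _).trans (h.norm_le 0)

lemma mono (h : DecayBound M b A η) (hA : A ≤ A') : DecayBound M b A' η :=
  ⟨h.smooth, fun k hk x => (h.bound k hk x).trans (by gcongr)⟩

lemma of_inTestClass (hn : 0 < n) (hb : b ≤ (N + n + 1 : ℕ)) {ψ : SchwartzMap (Euc n) ℂ}
    (hψ : inTestClass N ψ) : DecayBound (N + 1) b ((n : ℝ) ^ (N + 1)) ψ := by
  refine ⟨ψ.smooth ⊤, fun k hk x => ?_⟩
  have hmderiv (α : Fin n → ℕ) (hα : ∑ i, α i = k) : ‖mderiv α ψ x‖ ≤ (1 + ‖x‖) ^ (-b) := by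
    have hclass := hψ x α (by omega)
    rw [← le_div_iff₀' (by positivity), one_div, ← Real.rpow_natCast,
      ← Real.rpow_neg (by positivity)] at hclass
    exact hclass.trans (Real.rpow_le_rpow_of_exponent_le (by simp) (neg_le_neg hb))
  calc ‖iteratedFDeriv ℝ k ψ x‖ ≤ (n : ℝ) ^ k * (1 + ‖x‖) ^ (-b) :=
        norm_multilinear_le_of_norm_single_le (by positivity) _
          (norm_iteratedFDeriv_single_le (ψ.smooth ⊤) hmderiv)
    _ ≤ (n : ℝ) ^ (N + 1) * (1 + ‖x‖) ^ (-b) := by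
        gcongr
        exact_mod_cast hn

lemma conv {C D : ℝ} {A G : Euc n → ℂ} (hA : DecayBound M b C A) (hb : (n : ℝ) < b)
    (hAb : ∀ k : ℕ, ∃ C : ℝ, ∀ x, ‖iteratedFDeriv ℝ k A x‖ ≤ C) (hG : Continuous G)
    (hGD : ∀ x, ‖G x‖ ≤ D * (1 + ‖x‖) ^ (-b)) {τ : ℝ} (hτ : 0 < τ) (hτ1 : τ ≤ 1) :
    DecayBound M b (C * D * (2 ^ (b + 1) * ∫ w : Euc n, (1 + ‖w‖) ^ (-b)))
      fun v => ∫ w, dil G τ w * A (v - w) := by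
  have hC := hA.nonneg
  have hD : 0 ≤ D := by simpa using (norm_nonneg _).trans (hGD 0)
  have hdil (w : Euc n) : ‖dil G τ w‖ ≤ D * ((τ ^ n)⁻¹ * (1 + ‖τ⁻¹ • w‖) ^ (-b)) := by
    rw [norm_dil G hτ, mul_left_comm]
    gcongr
    exact hGD _
  have hint : Integrable (dil G τ) := ((integrable_dil_weight hb hτ).const_mul D).mono'
    (continuous_dil hG τ).aestronglyMeasurable (.of_forall hdil)
  have hconv (k : ℕ) := contDiff_and_norm_iteratedFDeriv_integral_smul_comp_sub_le hint
    (contDiff_infty.1 hA.smooth k) fun j _ => hAb j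
  refine ⟨contDiff_infty.2 fun k => (hconv k).1, fun k hk x => ((hconv k).2 x).trans ?_⟩
  calc ∫ w, ‖dil G τ w‖ * ‖iteratedFDeriv ℝ k A (x - w)‖
      ≤ ∫ w : Euc n, C * D * ((τ ^ n)⁻¹ * (1 + ‖τ⁻¹ • w‖) ^ (-b) * (1 + ‖x - w‖) ^ (-b)) := by
        refine integral_mono_of_nonneg (.of_forall fun w => by positivity)
          ((integrable_dil_weight_mul_weight hb hτ x).const_mul _) (.of_forall fun w => ?_)
        refine (mul_le_mul (hdil w) (hA.bound k hk _) (norm_nonneg _) (by positivity)).trans_eq ?_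
        ring
    _ ≤ C * D * (2 ^ (b + 1) * (∫ w : Euc n, (1 + ‖w‖) ^ (-b)) * (1 + ‖x‖) ^ (-b)) := by
        rw [integral_const_mul]
        gcongr
        exact integral_dil_weight_mul_weight_le hb hτ hτ1 x
    _ = C * D * (2 ^ (b + 1) * ∫ w : Euc n, (1 + ‖w‖) ^ (-b)) * (1 + ‖x‖) ^ (-b) := by ring

end DecayBound

lemma exists_norm_iteratedFDeriv_brKernel_le (n k : ℕ) (hδ : 0 < δ) :
    ∃ C, ∀ x, ‖iteratedFDeriv ℝ k (brKernel n δ) x‖ ≤ C * (1 + ‖x‖) ^ (-brExp n δ) := by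
  obtain ⟨C, hC⟩ := Asymptotics.isBigO_top.1 (isBigO_iteratedFDeriv_brKernel n k hδ)
  exact ⟨C, fun x => (hC x).trans_eq (by rw [Real.norm_of_nonneg (by positivity)])⟩

lemma exists_norm_iteratedFDeriv_brKernel_le_const (n k : ℕ) (hδ : 0 < δ) :
    ∃ C, ∀ x, ‖iteratedFDeriv ℝ k (brKernel n δ) x‖ ≤ C := by
  obtain ⟨C, hC⟩ := exists_norm_iteratedFDeriv_brKernel_le n k hδ
  have hC0 : 0 ≤ C := by simpa using (norm_nonneg _).trans (hC 0)
  exact ⟨C, fun x => (hC x).trans (mul_le_of_le_one_right hC0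
    (one_add_norm_rpow_neg_le_one (brExp_pos n hδ).le x))⟩

lemma exists_decayBound_brKernel (n M : ℕ) (hδ : 0 < δ) (hb : b ≤ brExp n δ) :
    ∃ C, DecayBound M b C (brKernel n δ) := by
  choose F hF using fun k => exists_norm_iteratedFDeriv_brKernel_le n k hδ
  obtain ⟨C, hC⟩ := ((Set.finite_Iic M).image F).bddAbove
  refine ⟨max C 0, contDiff_brKernel n hδ, fun k hk x => (hF k x).trans ?_⟩
  gcongr
  · exact (hC (mem_image_of_mem F hk)).trans (le_max_left _ _)
  · simp

lemma integral_dil_sub_mul_eq_dil_one (ψ K : Euc n → ℂ) (t : ℝ) (v : Euc n) :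
    ∫ w, dil ψ t (v - w) * K w = dil (fun v => ∫ w, dil ψ t w * K (v - w)) 1 v := by
  rw [← integral_sub_left_eq_self _ volume v]
  simp [dil]

lemma integral_dil_sub_mul_eq_dil (ψ K : Euc n → ℂ) {t : ℝ} (ht : 0 < t) (v : Euc n) :
    ∫ w, dil ψ t (v - w) * K w = dil (fun v => ∫ w, dil K t⁻¹ w * ψ (v - w)) t v := by
  have hscale := Measure.integral_comp_smul_of_nonneg volume
    (fun w : Euc n => dil ψ t (v - w) * K w) t (hR := ht.le)
  rw [eq_inv_smul_iff₀ (pow_pos ht _).ne'] at hscale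
  rw [← hscale, finrank_euclideanSpace_fin]
  simp only [dil, ← integral_smul]
  refine integral_congr_ae (.of_forall fun w => ?_)
  simp only [smul_sub, inv_smul_smul₀ ht.ne', inv_inv, inv_pow, Complex.real_smul]
  ring

/-- The larger of the scales `1` and `t` is factored out; the smoothing then happens at a relative
scale at most `1`. -/
lemma exists_smoothed_kernel (hn : 0 < n) (N : ℕ) (hδ : 0 < δ) (hb : (n : ℝ) < b)
    (hbN : b ≤ (N + n + 1 : ℕ)) (hbδ : b ≤ brExp n δ) :
    ∃ A : ℝ, 0 < A ∧ ∀ ψ : SchwartzMap (Euc n) ℂ, inTestClass N ψ → ∀ t : ℝ, 0 < t →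
      ∃ m : ℝ, 0 < m ∧ ∃ η : Euc n → ℂ, DecayBound (N + 1) b A η ∧
        ∀ v, ∫ w, dil ψ t (v - w) * brKernel n δ w = dil η m v := by
  obtain ⟨C, hC⟩ := exists_decayBound_brKernel n (N + 1) hδ hbδ
  refine ⟨max (C * (n : ℝ) ^ (N + 1) * (2 ^ (b + 1) * ∫ w : Euc n, (1 + ‖w‖) ^ (-b))) 1,
    lt_max_of_lt_right one_pos, fun ψ hψ t ht => ?_⟩
  have hψD := DecayBound.of_inTestClass hn hbN hψ
  rcases le_total t 1 with ht1 | ht1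
  · exact ⟨1, one_pos, _, (hC.conv hb (exists_norm_iteratedFDeriv_brKernel_le_const n · hδ)
      ψ.continuous hψD.norm_le ht ht1).mono (le_max_left _ _),
      integral_dil_sub_mul_eq_dil_one ψ _ t⟩
  · have hψb (k : ℕ) : ∃ C : ℝ, ∀ x, ‖iteratedFDeriv ℝ k ψ x‖ ≤ C := by
      obtain ⟨C, hC⟩ := ψ.decay 0 k
      exact ⟨C, fun x => by simpa using hC.2 x⟩
    have hconv := hψD.conv hb hψb (continuous_brKernel n hδ) hC.norm_le (inv_pos.2 ht)
      (inv_le_one_of_one_le₀ ht1)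
    rw [mul_comm _ C] at hconv
    exact ⟨t, ht, _, hconv.mono (le_max_left _ _), integral_dil_sub_mul_eq_dil ψ _ ht⟩

end Smoothing

/-! ### Associativity of the convolution with the kernel -/

section Associativity

variable {n : ℕ} {δ : ℝ}

lemma exists_norm_schwartzMap_le_rpow (ψ : SchwartzMap (Euc n) ℂ) (r : ℝ) :
    ∃ C : ℝ, ∀ u, ‖ψ u‖ ≤ C * (1 + ‖u‖) ^ (-r) := by
  obtain ⟨k, hk⟩ := exists_nat_ge r
  refine ⟨2 ^ k * ((Finset.Iic (k, 0)).sup fun m => SchwartzMap.seminorm ℝ m.1 m.2) ψ,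
    fun u => ?_⟩
  have hsemi := SchwartzMap.one_add_le_sup_seminorm_apply (𝕜 := ℝ) (m := (k, 0)) (k := k) (n := 0)
    le_rfl le_rfl ψ u
  rw [norm_iteratedFDeriv_zero] at hsemi
  rw [Real.rpow_neg (by positivity), ← div_eq_mul_inv, le_div_iff₀' (by positivity)]
  refine le_trans ?_ hsemi
  gcongr
  rw [← Real.rpow_natCast]
  exact Real.rpow_le_rpow_of_exponent_le (by simp) hk

lemma integrable_norm_dil_sub_mul_rpow (ψ : SchwartzMap (Euc n) ℂ) {t a : ℝ} (ht : 0 < t)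
    (ha : 0 ≤ a) (x : Euc n) :
    Integrable fun y : Euc n => ‖dil ψ t (x - y)‖ * (1 + ‖y‖) ^ a := by
  obtain ⟨C, hC⟩ := exists_norm_schwartzMap_le_rpow ψ (a + n + 1)
  have hcont : Continuous fun y => dil ψ t (x - y) :=
    (continuous_dil ψ.continuous t).comp (continuous_sub_left x)
  refine ((integrable_weight (lt_add_one (n : ℝ))).const_mul
    ((t ^ n)⁻¹ * C * ((1 + ‖x‖) * (1 + t)) ^ (a + n + 1))).mono'
    (hcont.norm.mul (continuous_one_add_norm_rpow a)).aestronglyMeasurable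
    (.of_forall fun y => ?_)
  have hsplit : (1 + ‖y‖) ^ (-((n : ℝ) + 1)) = (1 + ‖y‖) ^ (-(a + n + 1)) * (1 + ‖y‖) ^ a := by
    rw [← Real.rpow_add (by positivity)]
    congr 1
    ring
  rw [Real.norm_of_nonneg (by positivity), hsplit, ← mul_assoc]
  gcongr
  exact norm_dil_sub_le (by positivity) hC ht x y

lemma integrable_prod_mul_conv {V : Type*} [NormedAddCommGroup V] [SecondCountableTopology V]
    [MeasurableSpace V] [BorelSpace V] {μ : Measure V} [SFinite μ] {φ K f : V → ℂ} {a C : ℝ}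
    (ha : 0 ≤ a) (hφ : Continuous φ) (hφa : Integrable (fun y => ‖φ y‖ * (1 + ‖y‖) ^ a) μ)
    (hK : Continuous K) (hKC : ∀ x, ‖K x‖ ≤ C * (1 + ‖x‖) ^ (-a))
    (hf : Integrable (fun y => (1 + ‖y‖) ^ (-a) • f y) μ) :
    Integrable (Function.uncurry fun y z => φ y * (K (y - z) * f z)) (μ.prod μ) := by
  have hC : 0 ≤ C := by simpa using (norm_nonneg _).trans (hKC 0)
  have hφm : AEStronglyMeasurable (fun q : V × V => φ q.1) (μ.prod μ) :=
    (hφ.comp continuous_fst).aestronglyMeasurable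
  have hKm : AEStronglyMeasurable (fun q : V × V => K (q.1 - q.2)) (μ.prod μ) :=
    (hK.comp continuous_sub).aestronglyMeasurable
  refine ((hφa.mul_prod hf.norm).const_mul C).mono'
    (hφm.mul (hKm.mul (aestronglyMeasurable_of_integrable_weight_smul hf).comp_snd))
    (.of_forall fun ⟨y, z⟩ => ?_)
  have hpeetre : (1 + ‖y - z‖) ^ (-a) ≤ (1 + ‖y‖) ^ a * (1 + ‖z‖) ^ (-a) :=
    rpow_neg_le_mul_rpow_neg (by positivity) (by positivity) (by positivity) ha
      (one_add_norm_le_mul y z)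
  calc ‖φ y * (K (y - z) * f z)‖ = ‖φ y‖ * (‖K (y - z)‖ * ‖f z‖) := by rw [norm_mul, norm_mul]
    _ ≤ ‖φ y‖ * ((C * ((1 + ‖y‖) ^ a * (1 + ‖z‖) ^ (-a))) * ‖f z‖) := by
        gcongr
        exact (hKC _).trans (mul_le_mul_of_nonneg_left hpeetre hC)
    _ = C * (‖φ y‖ * (1 + ‖y‖) ^ a * ‖(1 + ‖z‖) ^ (-a) • f z‖) := by
        rw [norm_smul, Real.norm_of_nonneg (by positivity)]
        ring

lemma brOp_one (n : ℕ) (δ : ℝ) (f : Euc n → ℂ) (y : Euc n) :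
    brOp n δ 1 f y = ∫ z, brKernel n δ (y - z) * f z := by
  simp [brOp, dil]

lemma integrable_and_integral_dil_mul_brOp (hδ : 0 < δ) {f : Euc n → ℂ}
    (hf : Integrable fun y : Euc n => (1 + ‖y‖) ^ (-brExp n δ) • f y)
    (ψ : SchwartzMap (Euc n) ℂ) {t : ℝ} (ht : 0 < t) (x : Euc n) :
    Integrable (fun z => (∫ w, dil ψ t (x - z - w) * brKernel n δ w) * f z) ∧
      ∫ y, dil ψ t (x - y) * brOp n δ 1 f y =
        ∫ z, (∫ w, dil ψ t (x - z - w) * brKernel n δ w) * f z := by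
  have ha := (brExp_pos n hδ).le
  obtain ⟨C, hC⟩ := exists_decayBound_brKernel n 0 hδ le_rfl
  have hprod := integrable_prod_mul_conv ha
    ((continuous_dil ψ.continuous t).comp (continuous_sub_left x))
    (integrable_norm_dil_sub_mul_rpow ψ ht ha x) (continuous_brKernel n hδ) hC.norm_le hf
  have hinner (z : Euc n) : ∫ y, dil ψ t (x - y) * (brKernel n δ (y - z) * f z) =
      (∫ w, dil ψ t (x - z - w) * brKernel n δ w) * f z := by
    simp only [← mul_assoc]
    rw [integral_mul_const, ← integral_add_right_eq_self _ z]
    simp only [add_sub_cancel_right, sub_sub, add_comm z]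
  constructor
  · simpa only [Function.uncurry_apply_pair, Function.comp_apply, hinner]
      using hprod.integral_prod_right
  calc ∫ y, dil ψ t (x - y) * brOp n δ 1 f y
      = ∫ y, ∫ z, dil ψ t (x - y) * (brKernel n δ (y - z) * f z) := by
        simp_rw [brOp_one, integral_const_mul]
    _ = ∫ z, ∫ y, dil ψ t (x - y) * (brKernel n δ (y - z) * f z) := integral_integral_swap hprod
    _ = _ := integral_congr_ae (.of_forall hinner)

end Associativity

/-! ### Localization and the grand maximal function -/

section Localization

open scoped ContDiff

variable {n N : ℕ} {b A : ℝ}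

lemma enorm_integral_dil_mul_le_grandMax {φ : SchwartzMap (Euc n) ℂ} (hφ : inTestClass N φ)
    (f : Euc n → ℂ) {t : ℝ} (ht : 0 < t) (x : Euc n) :
    ‖∫ y, dil φ t (x - y) * f y‖ₑ ≤ grandMax N f x :=
  le_iSup₂_of_le φ hφ (le_iSup₂_of_le t ht le_rfl)

lemma inTestClass_inv_smul {θ : SchwartzMap (Euc n) ℂ} {L : ℝ} (hL : 0 < L)
    (hθ : ∀ k ≤ N + 1, ∀ w, (1 + ‖w‖) ^ (N + n + 1) * ‖iteratedFDeriv ℝ k θ w‖ ≤ L) :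
    inTestClass N (L⁻¹ • θ) := by
  intro w α hα
  have hmderiv : ‖mderiv α ⇑(L⁻¹ • θ) w‖ ≤ L⁻¹ * ‖iteratedFDeriv ℝ (∑ i, α i) θ w‖ := by
    refine (norm_mderiv_le ((L⁻¹ • θ).smooth ⊤) α w).trans_eq ?_
    rw [FunLike.coe_smul, iteratedFDeriv_const_smul_apply (θ.smooth _).contDiffAt, norm_smul,
      Real.norm_of_nonneg (inv_pos.2 hL).le]
  calc (1 + ‖w‖) ^ (N + n + 1) * ‖mderiv α ⇑(L⁻¹ • θ) w‖
      ≤ (1 + ‖w‖) ^ (N + n + 1) * (L⁻¹ * ‖iteratedFDeriv ℝ (∑ i, α i) θ w‖) := by gcongr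
    _ = L⁻¹ * ((1 + ‖w‖) ^ (N + n + 1) * ‖iteratedFDeriv ℝ (∑ i, α i) θ w‖) := by ring
    _ ≤ 1 := inv_mul_le_one_of_le₀ (hθ _ hα w) hL.le

lemma enorm_integral_dil_mul_le_mul_grandMax {θ : SchwartzMap (Euc n) ℂ} {L : ℝ} (hL : 0 < L)
    (hθ : ∀ k ≤ N + 1, ∀ w, (1 + ‖w‖) ^ (N + n + 1) * ‖iteratedFDeriv ℝ k θ w‖ ≤ L)
    (f : Euc n → ℂ) {t : ℝ} (ht : 0 < t) (x : Euc n) :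
    ‖∫ y, dil θ t (x - y) * f y‖ₑ ≤ ENNReal.ofReal L * grandMax N f x := by
  have hscale : ∫ y, dil θ t (x - y) * f y = L • ∫ y, dil ⇑(L⁻¹ • θ) t (x - y) * f y := by
    rw [← integral_smul]
    refine integral_congr_ae (.of_forall fun y => ?_)
    simp only [dil, FunLike.coe_smul, Pi.smul_apply]
    rw [smul_comm _ L⁻¹, smul_mul_assoc L⁻¹, smul_inv_smul₀ hL.ne']
  rw [hscale, enorm_smul, Real.enorm_of_nonneg hL.le]
  gcongr
  exact enorm_integral_dil_mul_le_grandMax (inTestClass_inv_smul hL hθ) f ht x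

/-- A smooth function of integral `1` supported in the closed unit ball; its translates average to
the constant `1` and cut a kernel into localized pieces. -/
def unitBump (n : ℕ) (u : Euc n) : ℂ :=
  ((⟨1 / 2, 1, by norm_num, by norm_num⟩ : ContDiffBump (0 : Euc n)).normed volume u : ℝ)

lemma contDiff_unitBump (n : ℕ) : ContDiff ℝ ∞ (unitBump n) :=
  Complex.ofRealCLM.contDiff.comp (ContDiffBump.contDiff_normed _ (n := ⊤))

lemma tsupport_unitBump_subset (n : ℕ) : tsupport (unitBump n) ⊆ Metric.closedBall 0 1 := by
  refine (tsupport_comp_subset Complex.ofReal_zero _).trans ?_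
  rw [ContDiffBump.tsupport_normed_eq]

lemma hasCompactSupport_unitBump (n : ℕ) : HasCompactSupport (unitBump n) :=
  (isCompact_closedBall 0 1).of_isClosed_subset (isClosed_tsupport _) (tsupport_unitBump_subset n)

lemma integral_unitBump (n : ℕ) : ∫ u, unitBump n u = 1 := by
  simp only [unitBump, integral_complex_ofReal, ContDiffBump.integral_normed, Complex.ofReal_one]

lemma integrable_unitBump (n : ℕ) : Integrable (unitBump n) :=
  (contDiff_unitBump n).continuous.integrable_of_hasCompactSupport (hasCompactSupport_unitBump n)

lemma exists_norm_iteratedFDeriv_unitBump_le (n M : ℕ) :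
    ∃ B : ℝ, 0 < B ∧ ∀ k ≤ M, ∀ v, ‖iteratedFDeriv ℝ k (unitBump n) v‖ ≤ B := by
  choose F hF using fun k : ℕ =>
    ((contDiff_unitBump n).continuous_iteratedFDeriv (m := k)
      (mod_cast le_top)).bounded_above_of_compact_support
        ((hasCompactSupport_unitBump n).iteratedFDeriv k)
  obtain ⟨B, hB⟩ := ((Set.finite_Iic M).image F).bddAbove
  exact ⟨max B 1, lt_max_of_lt_right one_pos, fun k hk v =>
    (hF k v).trans ((hB (mem_image_of_mem F hk)).trans (le_max_left _ _))⟩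

lemma mul_norm_iteratedFDeriv_mul_le {E : Type*} [NormedAddCommGroup E] [NormedSpace ℝ E]
    {f g : E → ℂ} (hf : ContDiff ℝ ∞ f) (hg : ContDiff ℝ ∞ g) {c K : ℝ} (hc : 0 ≤ c) {k : ℕ} {x : E}
    (h : ∀ i ≤ k, c * (‖iteratedFDeriv ℝ i f x‖ * ‖iteratedFDeriv ℝ (k - i) g x‖) ≤ K) :
    c * ‖iteratedFDeriv ℝ k (fun w => f w * g w) x‖ ≤ 2 ^ k * K := by
  calc c * ‖iteratedFDeriv ℝ k (fun w => f w * g w) x‖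
      ≤ c * ∑ i ∈ Finset.range (k + 1), (k.choose i : ℝ) * ‖iteratedFDeriv ℝ i f x‖ *
          ‖iteratedFDeriv ℝ (k - i) g x‖ := by
        gcongr
        exact norm_iteratedFDeriv_mul_le hf hg x (mod_cast le_top)
    _ = ∑ i ∈ Finset.range (k + 1), (k.choose i : ℝ) *
          (c * (‖iteratedFDeriv ℝ i f x‖ * ‖iteratedFDeriv ℝ (k - i) g x‖)) := by
        rw [Finset.mul_sum]
        exact Finset.sum_congr rfl fun i _ => by ring
    _ ≤ ∑ i ∈ Finset.range (k + 1), (k.choose i : ℝ) * K :=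
        Finset.sum_le_sum fun i hi => by
          gcongr
          exact h i (Nat.lt_succ_iff.1 (Finset.mem_range.1 hi))
    _ = 2 ^ k * K := by
        rw [← Finset.sum_mul, ← Nat.cast_sum, Nat.sum_range_choose, Nat.cast_pow, Nat.cast_ofNat]

lemma rpow_neg_add_le {u u' w : Euc n} (hb : 0 ≤ b) (hw : ‖w + (u' - u)‖ ≤ 1) :
    (1 + ‖w + u'‖) ^ (-b) ≤ 2 ^ b * (1 + ‖u‖) ^ (-b) := by
  refine rpow_neg_le_mul_rpow_neg (by positivity) (by positivity) zero_le_two hb ?_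
  have hsub := norm_sub_le (w + u') (w + (u' - u))
  rw [add_sub_add_left_eq_sub, sub_sub_cancel] at hsub
  linarith [norm_nonneg (w + u')]

/-- On the support of the translated bump `‖w‖ ≤ 2`, and `w + u'` stays within distance `1`
of `u`. -/
lemma norm_iteratedFDeriv_mul_norm_iteratedFDeriv_unitBump_le {M : ℕ} {B : ℝ} (hb : 0 ≤ b)
    {η : Euc n → ℂ} (hη : DecayBound M b A η)
    (hB : ∀ k ≤ M, ∀ v, ‖iteratedFDeriv ℝ k (unitBump n) v‖ ≤ B) {u u' : Euc n}
    (hu : ‖u' - u‖ ≤ 1) (L : ℕ) {i j : ℕ} (hi : i ≤ M) (hj : j ≤ M) (w : Euc n) :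
    (1 + ‖w‖) ^ L * (‖iteratedFDeriv ℝ i η (w + u')‖ *
        ‖iteratedFDeriv ℝ j (unitBump n) (w + (u' - u))‖) ≤
      3 ^ L * (A * (2 ^ b * (1 + ‖u‖) ^ (-b)) * B) := by
  have hA := hη.nonneg
  have hB0 : 0 ≤ B := (norm_nonneg _).trans (hB j hj 0)
  by_cases hmem : w + (u' - u) ∈ tsupport (unitBump n)
  · have hball : ‖w + (u' - u)‖ ≤ 1 := by simpa using tsupport_unitBump_subset n hmem
    have hw : 1 + ‖w‖ ≤ 3 := by
      have hsub := norm_sub_le (w + (u' - u)) (u' - u)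
      rw [add_sub_cancel_right] at hsub
      linarith
    gcongr
    · exact (hη.bound i hi _).trans (by gcongr; exact rpow_neg_add_le hb hball)
    · exact hB j hj _
  · have hzero : iteratedFDeriv ℝ j (unitBump n) (w + (u' - u)) = 0 := by
      by_contra h
      exact hmem (support_iteratedFDeriv_subset j h)
    rw [hzero, norm_zero, mul_zero, mul_zero]
    positivity

/-- The piece of `η` near `u`, recentred at a nearby point `u'`, is a test function of size
`(1 + |u|)^{-b}`. -/
lemma exists_enorm_integral_unitBump_mul_le (n N : ℕ) (hb : 0 ≤ b) :
    ∃ C : ℝ, 0 < C ∧ ∀ A : ℝ, 0 < A → ∀ η : Euc n → ℂ, DecayBound (N + 1) b A η →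
      ∀ m : ℝ, 0 < m → ∀ (f : Euc n → ℂ) (x u u' : Euc n), ‖u' - u‖ ≤ 1 →
        ‖∫ y, unitBump n (m⁻¹ • (x - y) - u) * (dil η m (x - y) * f y)‖ₑ ≤
          ENNReal.ofReal (C * A * (1 + ‖u‖) ^ (-b)) * grandMax N f (x - m • u') := by
  obtain ⟨B, hB, hχB⟩ := exists_norm_iteratedFDeriv_unitBump_le n (N + 1)
  refine ⟨2 ^ (N + 1) * (3 ^ (N + n + 1) * (2 ^ b * B)), by positivity, ?_⟩
  intro A hA η hη m hm f x u u' hu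
  have hηd : ContDiff ℝ ∞ fun w => η (w + u') := hη.smooth.comp (contDiff_id.add contDiff_const)
  have hχd : ContDiff ℝ ∞ fun w => unitBump n (w + (u' - u)) :=
    (contDiff_unitBump n).comp (contDiff_id.add contDiff_const)
  have hsupp : HasCompactSupport fun w => η (w + u') * unitBump n (w + (u' - u)) :=
    ((hasCompactSupport_unitBump n).comp_homeomorph (Homeomorph.addRight (u' - u))).mul_left
  have hclass (k : ℕ) (hk : k ≤ N + 1) (w : Euc n) : (1 + ‖w‖) ^ (N + n + 1) *
      ‖iteratedFDeriv ℝ k (hsupp.toSchwartzMap (hηd.mul hχd)) w‖ ≤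
        2 ^ (N + 1) * (3 ^ (N + n + 1) * (2 ^ b * B)) * A * (1 + ‖u‖) ^ (-b) := by
    refine (mul_norm_iteratedFDeriv_mul_le hηd hχd (by positivity) fun i hi => ?_).trans
      (b := 2 ^ k * (3 ^ (N + n + 1) * (A * (2 ^ b * (1 + ‖u‖) ^ (-b)) * B))) ?_
    · rw [iteratedFDeriv_comp_add_right, iteratedFDeriv_comp_add_right]
      exact norm_iteratedFDeriv_mul_norm_iteratedFDeriv_unitBump_le hb hη hχB hu _ (by omega)
        (by omega) w
    · calc 2 ^ k * (3 ^ (N + n + 1) * (A * (2 ^ b * (1 + ‖u‖) ^ (-b)) * B))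
          ≤ 2 ^ (N + 1) * (3 ^ (N + n + 1) * (A * (2 ^ b * (1 + ‖u‖) ^ (-b)) * B)) := by
            gcongr
            exact one_le_two
        _ = _ := by ring
  refine (enorm_integral_dil_mul_le_mul_grandMax (by positivity) hclass f hm
    (x - m • u')).trans_eq' ?_
  have hshift (y : Euc n) : m⁻¹ • (x - m • u' - y) = m⁻¹ • (x - y) - u' := by
    rw [sub_right_comm, smul_sub, inv_smul_smul₀ hm.ne']
  congr 1
  refine integral_congr_ae (.of_forall fun y => ?_)
  simp only [dil, HasCompactSupport.toSchwartzMap_toFun, hshift, sub_add_cancel,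
    sub_add_sub_cancel, Complex.real_smul]
  ring

lemma integrable_prod_unitBump_mul {F : Euc n → ℂ} (hF : Integrable F) {g : Euc n → Euc n}
    (hg : Continuous g) :
    Integrable (Function.uncurry fun y u => unitBump n (g y - u) * F y)
      (volume.prod volume) := by
  have hbump : Continuous fun q : Euc n × Euc n => unitBump n (g q.1 - q.2) :=
    (contDiff_unitBump n).continuous.comp ((hg.comp continuous_fst).sub continuous_snd)
  have hmeas : AEStronglyMeasurable (Function.uncurry fun y u => unitBump n (g y - u) * F y)
      (volume.prod volume) :=
    hbump.aestronglyMeasurable.mul hF.aestronglyMeasurable.comp_fst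
  refine (integrable_prod_iff hmeas).2
    ⟨.of_forall fun y => ((integrable_unitBump n).comp_sub_left (g y)).mul_const (F y), ?_⟩
  simp only [Function.uncurry_apply_pair, norm_mul, integral_mul_const,
    integral_sub_left_eq_self (fun u => ‖unitBump n u‖) volume]
  exact hF.norm.const_mul _

lemma enorm_integral_le_lintegral_unitBump_mul {F : Euc n → ℂ} (hF : Integrable F)
    {g : Euc n → Euc n} (hg : Continuous g) :
    ‖∫ y, F y‖ₑ ≤ ∫⁻ u, ‖∫ y, unitBump n (g y - u) * F y‖ₑ := by
  have haverage : ∫ y, F y = ∫ u, ∫ y, unitBump n (g y - u) * F y := by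
    rw [← integral_integral_swap (integrable_prod_unitBump_mul hF hg)]
    simp only [integral_mul_const, integral_sub_left_eq_self (unitBump n) volume,
      integral_unitBump, one_mul]
  rw [haverage]
  exact enorm_integral_le_lintegral_enorm _

lemma continuous_integral_dil_mul {a : ℝ} (ha : 0 ≤ a) {f : Euc n → ℂ}
    (hf : Integrable fun y : Euc n => (1 + ‖y‖) ^ (-a) • f y) (φ : SchwartzMap (Euc n) ℂ) {t : ℝ}
    (ht : 0 < t) : Continuous fun x => ∫ y, dil φ t (x - y) * f y := by
  obtain ⟨C, hC⟩ := exists_norm_schwartzMap_le_rpow φ a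
  have hC0 : 0 ≤ C := by simpa using (norm_nonneg _).trans (hC 0)
  have hdil := continuous_dil φ.continuous t
  refine continuous_iff_continuousAt.2 fun x₀ => continuousAt_of_dominated
    (bound := fun y => (t ^ n)⁻¹ * C * ((1 + (‖x₀‖ + 1)) * (1 + t)) ^ a *
      ‖(1 + ‖y‖) ^ (-a) • f y‖) (.of_forall fun x => ?_) ?_ (hf.norm.const_mul _)
    (.of_forall fun y => (hdil.comp (continuous_sub_right y)).continuousAt.mul continuousAt_const)
  · exact (hdil.comp (continuous_sub_left x)).aestronglyMeasurable.mul
      (aestronglyMeasurable_of_integrable_weight_smul hf)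
  · filter_upwards [Metric.ball_mem_nhds x₀ one_pos] with x hx
    refine .of_forall fun y => ?_
    have hxn : ‖x‖ ≤ ‖x₀‖ + 1 := (norm_le_norm_add_norm_sub x₀ x).trans
      (by gcongr; exact (mem_ball_iff_norm'.1 hx).le)
    rw [norm_mul, norm_smul, Real.norm_of_nonneg (by positivity), ← mul_assoc]
    gcongr
    exact (norm_dil_sub_le ha hC ht x y).trans (by gcongr)

lemma lowerSemicontinuous_grandMax (N : ℕ) {a : ℝ} (ha : 0 ≤ a) {f : Euc n → ℂ}
    (hf : Integrable fun y : Euc n => (1 + ‖y‖) ^ (-a) • f y) :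
    LowerSemicontinuous (grandMax N f) :=
  lowerSemicontinuous_iSup fun φ => lowerSemicontinuous_iSup fun _ =>
    lowerSemicontinuous_iSup fun _ => lowerSemicontinuous_iSup fun ht =>
      (continuous_integral_dil_mul ha hf φ ht).enorm.lowerSemicontinuous

end Localization

/-! ### The Hardy–Littlewood maximal function over balls -/

section BallMax

open Metric Module

variable {E : Type*} [NormedAddCommGroup E] [MeasurableSpace E] {μ : Measure E}

/-- The centred Hardy–Littlewood maximal function of `h` with respect to `μ`, over closed balls. -/
def ballMax (μ : Measure E) (h : E → ℝ≥0∞) (x : E) : ℝ≥0∞ :=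
  ⨆ (r : ℝ) (_ : 0 < r), (μ (closedBall x r))⁻¹ * ∫⁻ y in closedBall x r, h y ∂μ

variable [NormedSpace ℝ E] [FiniteDimensional ℝ E] [μ.IsAddHaarMeasure]

lemma lintegral_closedBall_le_ballMax (h : E → ℝ≥0∞) (x : E) {r : ℝ} (hr : 0 < r) :
    ∫⁻ y in closedBall x r, h y ∂μ ≤ μ (closedBall x r) * ballMax μ h x := by
  rw [← ENNReal.inv_mul_le_iff (measure_closedBall_pos μ x hr).ne' measure_closedBall_lt_top.ne]
  exact le_iSup₂_of_le r hr le_rfl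

lemma exists_mul_measure_closedBall_le {h : E → ℝ≥0∞} {τ : ℝ≥0∞} {x : E}
    (hx : τ < ballMax μ h x) :
    ∃ r : ℝ, 0 < r ∧ τ * μ (closedBall x r) ≤ ∫⁻ y in closedBall x r, h y ∂μ := by
  simp only [ballMax, lt_iSup_iff] at hx
  obtain ⟨r, hr, hτ⟩ := hx
  refine ⟨r, hr, ?_⟩
  rw [mul_comm _ (lintegral _ _), ← div_eq_mul_inv] at hτ
  exact (ENNReal.le_div_iff_mul_le (.inl (measure_closedBall_pos μ x hr).ne')
    (.inl measure_closedBall_lt_top.ne)).1 hτ.le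

lemma ballMax_le_ballMax_indicator_add (h : E → ℝ≥0∞) (c : ℝ≥0∞) (x : E) :
    ballMax μ h x ≤ ballMax μ ({y | c < h y}.indicator h) x + c := by
  have hle (y : E) : h y ≤ {y | c < h y}.indicator h y + c := by
    by_cases hy : c < h y
    · exact (indicator_of_mem (show y ∈ {y | c < h y} from hy) h).ge.trans le_self_add
    · exact (not_lt.1 hy).trans le_add_self
  refine iSup₂_le fun r hr => ?_
  have hpos : μ (closedBall x r) ≠ 0 := (measure_closedBall_pos μ x hr).ne'
  rw [ENNReal.inv_mul_le_iff hpos measure_closedBall_lt_top.ne]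
  calc ∫⁻ y in closedBall x r, h y ∂μ
      ≤ ∫⁻ y in closedBall x r, ({y | c < h y}.indicator h y + c) ∂μ := lintegral_mono hle
    _ = (∫⁻ y in closedBall x r, {y | c < h y}.indicator h y ∂μ) + c * μ (closedBall x r) := by
        rw [lintegral_add_right _ measurable_const, setLIntegral_const]
    _ ≤ μ (closedBall x r) * (ballMax μ ({y | c < h y}.indicator h) x + c) := by
        rw [mul_add, mul_comm c]
        gcongr
        exact lintegral_closedBall_le_ballMax _ x hr

variable [BorelSpace E]

lemma lintegral_comp_sub_smul {F : E → ℝ≥0∞} (hF : Measurable F) (x : E) {m : ℝ} (hm : 0 < m) :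
    ∫⁻ u, F (x - m • u) ∂μ = ENNReal.ofReal ((m ^ finrank ℝ E)⁻¹) * ∫⁻ y, F y ∂μ := by
  have hG : Measurable fun v => F (x - v) := hF.comp (measurable_const.sub measurable_id)
  calc ∫⁻ u, F (x - m • u) ∂μ = ∫⁻ v, F (x - v) ∂(Measure.map (m • ·) μ) :=
        (lintegral_map hG (measurable_const_smul m)).symm
    _ = ENNReal.ofReal ((m ^ finrank ℝ E)⁻¹) * ∫⁻ y, F y ∂μ := by
        rw [Measure.map_addHaar_smul μ hm.ne', lintegral_smul_measure,
          lintegral_sub_left_eq_self F x, abs_of_pos (by positivity), smul_eq_mul]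

lemma lintegral_closedBall_comp_le {h : E → ℝ≥0∞} (hh : Measurable h) (x : E) {m s : ℝ}
    (hm : 0 < m) (hs : 0 < s) :
    ∫⁻ u in closedBall 0 s, h (x - m • u) ∂μ ≤
      ENNReal.ofReal (s ^ finrank ℝ E) * μ (closedBall (0 : E) 1) * ballMax μ h x := by
  have hpre : closedBall (0 : E) s = (fun u => x - m • u) ⁻¹' closedBall x (m * s) := by
    ext u
    rw [mem_preimage, mem_closedBall_zero_iff, mem_closedBall_iff_norm, sub_sub_cancel_left,
      norm_neg, norm_smul, Real.norm_of_nonneg hm.le, mul_le_mul_iff_right₀ hm]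
  calc ∫⁻ u in closedBall 0 s, h (x - m • u) ∂μ
      = ∫⁻ u, (closedBall x (m * s)).indicator h (x - m • u) ∂μ := by
        rw [← lintegral_indicator isClosed_closedBall.measurableSet, hpre]
        rfl
    _ = ENNReal.ofReal ((m ^ finrank ℝ E)⁻¹) * ∫⁻ y in closedBall x (m * s), h y ∂μ := by
        rw [lintegral_comp_sub_smul (hh.indicator isClosed_closedBall.measurableSet) x hm,
          lintegral_indicator isClosed_closedBall.measurableSet]
    _ ≤ ENNReal.ofReal ((m ^ finrank ℝ E)⁻¹) *
          (μ (closedBall x (m * s)) * ballMax μ h x) := by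
        gcongr
        exact lintegral_closedBall_le_ballMax h x (by positivity)
    _ = ENNReal.ofReal (s ^ finrank ℝ E) * μ (closedBall (0 : E) 1) * ballMax μ h x := by
        rw [Measure.addHaar_closedBall' μ x (by positivity), ← mul_assoc, ← mul_assoc,
          ← ENNReal.ofReal_mul (by positivity), mul_pow, inv_mul_cancel_left₀ (by positivity)]

lemma le_mul_ballMax_of_forall_le {h : E → ℝ≥0∞} (hh : Measurable h) {x u : E} {m : ℝ}
    (hm : 0 < m) {a K : ℝ≥0∞} (ha : ∀ u', ‖u' - u‖ ≤ 1 → a ≤ K * h (x - m • u')) :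
    a ≤ K * ENNReal.ofReal ((1 + ‖u‖) ^ finrank ℝ E) * ballMax μ h x := by
  have hcomp : Measurable fun u : E => h (x - m • u) :=
    hh.comp (measurable_const.sub (measurable_const_smul m))
  have hsub : closedBall u 1 ⊆ closedBall 0 (1 + ‖u‖) :=
    closedBall_subset_closedBall' (by rw [dist_zero_right])
  have hpos : μ (closedBall u 1) ≠ 0 := (measure_closedBall_pos μ u one_pos).ne'
  refine (ENNReal.mul_le_mul_iff_left hpos measure_closedBall_lt_top.ne).1 ?_
  calc a * μ (closedBall u 1) = ∫⁻ _ in closedBall u 1, a ∂μ := (setLIntegral_const _ _).symm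
    _ ≤ ∫⁻ u' in closedBall u 1, K * h (x - m • u') ∂μ :=
        setLIntegral_mono (hcomp.const_mul _) fun u' hu' => ha u' (mem_closedBall_iff_norm.1 hu')
    _ ≤ ∫⁻ u' in closedBall 0 (1 + ‖u‖), K * h (x - m • u') ∂μ := lintegral_mono_set hsub
    _ = K * ∫⁻ u' in closedBall 0 (1 + ‖u‖), h (x - m • u') ∂μ := lintegral_const_mul _ hcomp
    _ ≤ K * (ENNReal.ofReal ((1 + ‖u‖) ^ finrank ℝ E) * μ (closedBall (0 : E) 1) *
          ballMax μ h x) := by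
        gcongr
        exact lintegral_closedBall_comp_le hh x hm (by positivity)
    _ = K * ENNReal.ofReal ((1 + ‖u‖) ^ finrank ℝ E) * ballMax μ h x * μ (closedBall u 1) := by
        rw [Measure.addHaar_closedBall_center μ u]
        ring

lemma exists_norm_le_two_pow_le {V : Type*} [SeminormedAddCommGroup V] (u : V) :
    ∃ k : ℕ, ‖u‖ ≤ 2 ^ k ∧ (2 : ℝ) ^ k ≤ 2 * (1 + ‖u‖) := by
  obtain ⟨k, hlow, hup⟩ := exists_nat_pow_near (le_add_of_nonneg_right (norm_nonneg u))
    (one_lt_two (α := ℝ))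
  exact ⟨k + 1, by linarith, by rw [pow_succ']; gcongr⟩

lemma weight_le_tsum_indicator {V : Type*} [SeminormedAddCommGroup V] {κ : ℝ} (hκ : 0 ≤ κ) (u : V) :
    ENNReal.ofReal ((1 + ‖u‖) ^ (-κ)) ≤ ∑' k : ℕ, ENNReal.ofReal (2 ^ κ * ((2 : ℝ) ^ k) ^ (-κ)) *
      (closedBall (0 : V) (2 ^ k)).indicator 1 u := by
  obtain ⟨k, hk, hk'⟩ := exists_norm_le_two_pow_le u
  refine le_trans ?_ (ENNReal.le_tsum k)
  rw [indicator_of_mem (mem_closedBall_zero_iff.2 hk), Pi.one_apply, mul_one]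
  exact ENNReal.ofReal_le_ofReal
    (rpow_neg_le_mul_rpow_neg (by positivity) (by positivity) zero_le_two hκ hk')

lemma lintegral_weight_mul_le_tsum {V : Type*} [SeminormedAddCommGroup V] [MeasurableSpace V]
    [OpensMeasurableSpace V] {μ : Measure V} {κ : ℝ} (hκ : 0 ≤ κ) {g : V → ℝ≥0∞}
    (hg : Measurable g) :
    ∫⁻ u, ENNReal.ofReal ((1 + ‖u‖) ^ (-κ)) * g u ∂μ ≤
      ∑' k : ℕ, ENNReal.ofReal (2 ^ κ * ((2 : ℝ) ^ k) ^ (-κ)) *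
        ∫⁻ u in closedBall (0 : V) (2 ^ k), g u ∂μ := by
  have hball (k : ℕ) : MeasurableSet (closedBall (0 : V) (2 ^ k)) :=
    isClosed_closedBall.measurableSet
  calc ∫⁻ u, ENNReal.ofReal ((1 + ‖u‖) ^ (-κ)) * g u ∂μ
      ≤ ∫⁻ u, ∑' k : ℕ, ENNReal.ofReal (2 ^ κ * ((2 : ℝ) ^ k) ^ (-κ)) *
          (closedBall (0 : V) (2 ^ k)).indicator g u ∂μ := by
        refine lintegral_mono fun u => ?_
        refine (mul_le_mul_left (weight_le_tsum_indicator hκ u) _).trans_eq ?_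
        simp only [← ENNReal.tsum_mul_right, mul_assoc, ← indicator_mul_left, Pi.one_apply, one_mul]
    _ = ∑' k : ℕ, ENNReal.ofReal (2 ^ κ * ((2 : ℝ) ^ k) ^ (-κ)) *
          ∫⁻ u in closedBall (0 : V) (2 ^ k), g u ∂μ := by
        rw [lintegral_tsum fun k => ((hg.indicator (hball k)).const_mul _).aemeasurable]
        refine tsum_congr fun k => ?_
        rw [lintegral_const_mul' _ _ ENNReal.ofReal_ne_top, lintegral_indicator (hball k)]

lemma exists_lintegral_weight_mul_le_ballMax (μ : Measure E) [μ.IsAddHaarMeasure] {κ : ℝ}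
    (hκ : (finrank ℝ E : ℝ) < κ) :
    ∃ C : ℝ≥0∞, C ≠ ⊤ ∧ ∀ h : E → ℝ≥0∞, Measurable h → ∀ (x : E) (m : ℝ), 0 < m →
      ∫⁻ u, ENNReal.ofReal ((1 + ‖u‖) ^ (-κ)) * h (x - m • u) ∂μ ≤ C * ballMax μ h x := by
  have hκ0 : 0 ≤ κ := (Nat.cast_nonneg _).trans hκ.le
  set r : ℝ := 2 ^ ((finrank ℝ E : ℝ) - κ) with hr
  have hr1 : r < 1 := Real.rpow_lt_one_of_one_lt_of_neg one_lt_two (sub_neg.2 hκ)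
  have hdyadic (k : ℕ) : ((2 : ℝ) ^ k) ^ (-κ) * ((2 : ℝ) ^ k) ^ finrank ℝ E = r ^ k := by
    simp only [hr, ← Real.rpow_natCast, ← Real.rpow_mul zero_le_two, ← Real.rpow_add two_pos]
    congr 1
    ring
  refine ⟨(∑' k : ℕ, ENNReal.ofReal (2 ^ κ * r ^ k)) * μ (closedBall 0 1), ENNReal.mul_ne_top
    ((summable_geometric_of_lt_one (by positivity) hr1).mul_left _).tsum_ofReal_ne_top
    measure_closedBall_lt_top.ne, fun h hh x m hm => ?_⟩
  have hcomp : Measurable fun u : E => h (x - m • u) :=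
    hh.comp (measurable_const.sub (measurable_const_smul m))
  refine (lintegral_weight_mul_le_tsum hκ0 hcomp).trans ?_
  rw [← ENNReal.tsum_mul_right, ← ENNReal.tsum_mul_right]
  refine ENNReal.tsum_le_tsum fun k => ?_
  calc ENNReal.ofReal (2 ^ κ * ((2 : ℝ) ^ k) ^ (-κ)) *
        ∫⁻ u in closedBall 0 (2 ^ k), h (x - m • u) ∂μ
      ≤ ENNReal.ofReal (2 ^ κ * ((2 : ℝ) ^ k) ^ (-κ)) *
          (ENNReal.ofReal (((2 : ℝ) ^ k) ^ finrank ℝ E) * μ (closedBall 0 1) * ballMax μ h x) := by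
        gcongr
        exact lintegral_closedBall_comp_le hh x hm (by positivity)
    _ = ENNReal.ofReal (2 ^ κ * r ^ k) * μ (closedBall 0 1) * ballMax μ h x := by
        rw [← mul_assoc, ← mul_assoc, ← ENNReal.ofReal_mul (by positivity), mul_assoc (2 ^ κ),
          hdyadic]

lemma le_mul_of_rpow_le_mul_rpow {a c M X Y : ℝ≥0∞} {b d q : ℝ} (hq0 : 0 < q) (hq1 : q ≤ 1)
    (hY0 : Y ≠ 0) (hYt : Y ≠ ⊤) (haX : a ^ q ≤ c ^ q * Y ^ (-b * q) * X)
    (haM : a ^ q ≤ c ^ q * Y ^ (-b * q) * Y ^ d * M) :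
    a ≤ c * M ^ ((1 - q) / q) * (Y ^ (-(b - d / q + d)) * X) := by
  have hq : 0 ≤ 1 - q := sub_nonneg.2 hq1
  have hqq : 0 ≤ (1 - q) / q := by positivity
  have haM' := ENNReal.rpow_le_rpow haM hqq
  rw [mul_assoc (c ^ q), ← ENNReal.rpow_add _ _ hY0 hYt, ENNReal.mul_rpow_of_nonneg _ _ hqq,
    ENNReal.mul_rpow_of_nonneg _ _ hqq, ← ENNReal.rpow_mul, ← ENNReal.rpow_mul, ← ENNReal.rpow_mul,
    mul_div_cancel₀ _ hq0.ne'] at haM'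
  have hone (z : ℝ≥0∞) : z ^ (1 - q) * z ^ q = z := by
    rw [← ENNReal.rpow_add_of_nonneg _ _ hq hq0.le, sub_add_cancel, ENNReal.rpow_one]
  have hY : Y ^ ((-b * q + d) * ((1 - q) / q)) * Y ^ (-b * q) = Y ^ (-(b - d / q + d)) := by
    rw [← ENNReal.rpow_add _ _ hY0 hYt]
    congr 1
    field_simp
    ring
  calc a = a ^ (1 - q) * a ^ q := (hone a).symm
    _ ≤ (c ^ (1 - q) * Y ^ ((-b * q + d) * ((1 - q) / q)) * M ^ ((1 - q) / q)) *
          (c ^ q * Y ^ (-b * q) * X) := mul_le_mul' haM' haX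
    _ = (c ^ (1 - q) * c ^ q) * M ^ ((1 - q) / q) *
          ((Y ^ ((-b * q + d) * ((1 - q) / q)) * Y ^ (-b * q)) * X) := by ring
    _ = c * M ^ ((1 - q) / q) * (Y ^ (-(b - d / q + d)) * X) := by rw [hone, hY]

/-- Averaging the hypothesis in `u'` bounds `a ^ (1 - q)` by the maximal function, while `u' = u`
bounds `a ^ q`. -/
lemma le_weight_mul_ballMax_rpow_of_forall_le {q : ℝ} (hq0 : 0 < q) (hq1 : q ≤ 1) (b : ℝ)
    {g : E → ℝ≥0∞} (hg : Measurable g) {a c : ℝ≥0∞} {x u : E} {m : ℝ} (hm : 0 < m)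
    (ha : ∀ u', ‖u' - u‖ ≤ 1 → a ≤ c * ENNReal.ofReal ((1 + ‖u‖) ^ (-b)) * g (x - m • u')) :
    a ≤ c * ballMax μ (fun y => g y ^ q) x ^ ((1 - q) / q) *
      (ENNReal.ofReal ((1 + ‖u‖) ^ (-(b - finrank ℝ E / q + finrank ℝ E))) *
        g (x - m • u) ^ q) := by
  have hu : 0 < 1 + ‖u‖ := by positivity
  have haq (u' : E) (hu' : ‖u' - u‖ ≤ 1) :
      a ^ q ≤ c ^ q * ENNReal.ofReal (1 + ‖u‖) ^ (-b * q) * g (x - m • u') ^ q := by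
    have hrpow := ENNReal.rpow_le_rpow (ha u' hu') hq0.le
    rwa [ENNReal.mul_rpow_of_nonneg _ _ hq0.le, ENNReal.mul_rpow_of_nonneg _ _ hq0.le,
      ← ENNReal.ofReal_rpow_of_pos hu, ← ENNReal.rpow_mul] at hrpow
  have havg := le_mul_ballMax_of_forall_le (μ := μ) (hg.pow_const q) hm haq
  rw [← Real.rpow_natCast, ← ENNReal.ofReal_rpow_of_pos hu] at havg
  rw [← ENNReal.ofReal_rpow_of_pos hu]
  exact le_mul_of_rpow_le_mul_rpow hq0 hq1 (by simpa using hu) ENNReal.ofReal_ne_top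
    (haq u (by simp)) havg

lemma exists_lintegral_le_ballMax_rpow (μ : Measure E) [μ.IsAddHaarMeasure] {b q : ℝ}
    (hq0 : 0 < q) (hq1 : q ≤ 1) (hb : finrank ℝ E / q < b) :
    ∃ C : ℝ≥0∞, C ≠ ⊤ ∧ ∀ g : E → ℝ≥0∞, Measurable g → ∀ (c : ℝ≥0∞) (x : E) (m : ℝ), 0 < m →
      ∀ j : E → ℝ≥0∞,
      (∀ u u', ‖u' - u‖ ≤ 1 → j u ≤ c * ENNReal.ofReal ((1 + ‖u‖) ^ (-b)) * g (x - m • u')) →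
      ∫⁻ u, j u ∂μ ≤ c * C * ballMax μ (fun y => g y ^ q) x ^ (1 / q) := by
  obtain ⟨C, hC, hweight⟩ := exists_lintegral_weight_mul_le_ballMax μ
    (κ := b - finrank ℝ E / q + finrank ℝ E) (by linarith)
  refine ⟨C, hC, fun g hg c x m hm j hj => ?_⟩
  have hgq : Measurable fun y => g y ^ q := hg.pow_const q
  set M := ballMax μ (fun y => g y ^ q) x
  calc ∫⁻ u, j u ∂μ
      ≤ ∫⁻ u, c * M ^ ((1 - q) / q) *
          (ENNReal.ofReal ((1 + ‖u‖) ^ (-(b - finrank ℝ E / q + finrank ℝ E))) *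
            g (x - m • u) ^ q) ∂μ :=
        lintegral_mono fun u => le_weight_mul_ballMax_rpow_of_forall_le hq0 hq1 b hg hm (hj u)
    _ = c * M ^ ((1 - q) / q) *
          ∫⁻ u, ENNReal.ofReal ((1 + ‖u‖) ^ (-(b - finrank ℝ E / q + finrank ℝ E))) *
            g (x - m • u) ^ q ∂μ :=
        lintegral_const_mul _ (Measurable.mul (by fun_prop)
          (hgq.comp (measurable_const.sub (measurable_const_smul m))))
    _ ≤ c * M ^ ((1 - q) / q) * (C * M) := by
        gcongr
        exact hweight _ hgq x m hm
    _ = c * C * (M ^ ((1 - q) / q) * M ^ (1 : ℝ)) := by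
        rw [ENNReal.rpow_one]
        ring
    _ = c * C * M ^ (1 / q) := by
        rw [← ENNReal.rpow_add_of_nonneg _ _ (div_nonneg (sub_nonneg.2 hq1) hq0.le) zero_le_one,
          div_add_one hq0.ne', sub_add_cancel]

end BallMax

/-! ### Weak-type bounds for the maximal function -/

section WeakType

open Metric Module

variable {E : Type*} [NormedAddCommGroup E] [NormedSpace ℝ E] [FiniteDimensional ℝ E]
  [MeasurableSpace E] [BorelSpace E] {μ : Measure E} [μ.IsAddHaarMeasure]

lemma radius_le_of_mul_measure_closedBall_le [Nontrivial E] {τ I : ℝ≥0∞} (hτ0 : τ ≠ 0)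
    (hτ : τ ≠ ⊤) (hI : I ≠ ⊤) {x : E} {r : ℝ} (h : τ * μ (closedBall x r) ≤ I) :
    r ≤ max 1 (I / (τ * μ (closedBall 0 1))).toReal := by
  rcases le_total r 1 with hr | hr
  · exact hr.trans (le_max_left _ _)
  refine le_max_of_le_right ((le_self_pow₀ hr (finrank_pos (R := ℝ) (M := E)).ne').trans ?_)
  have hpos : τ * μ (closedBall 0 1) ≠ 0 :=
    mul_ne_zero hτ0 (measure_closedBall_pos μ 0 one_pos).ne'
  refine (ENNReal.ofReal_le_iff_le_toReal (ENNReal.div_ne_top hI hpos)).1 ?_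
  rwa [ENNReal.le_div_iff_mul_le (.inl hpos)
    (.inl (ENNReal.mul_ne_top hτ measure_closedBall_lt_top.ne)), mul_left_comm,
    ← Measure.addHaar_closedBall' μ x (zero_le_one.trans hr)]

lemma exists_pairwiseDisjoint_closedBall_measure_le (μ : Measure E) [μ.IsAddHaarMeasure] {S : Set E}
    {r : E → ℝ} {R : ℝ} (hr : ∀ x ∈ S, 0 < r x) (hR : ∀ x ∈ S, r x ≤ R) :
    ∃ u ⊆ S, u.Countable ∧ u.PairwiseDisjoint (fun x => closedBall x (r x)) ∧
      μ S ≤ ENNReal.ofReal (5 ^ finrank ℝ E) * ∑' x : u, μ (closedBall (x : E) (r x)) := by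
  obtain ⟨u, huS, hdisj, hcover⟩ := Vitali.exists_disjoint_subfamily_covering_enlargement_closedBall
    S id r R hR 5 (by norm_num)
  have hcount : u.Countable := hdisj.countable_of_nonempty_interior fun x hx =>
    ⟨x, ball_subset_interior_closedBall (mem_ball_self (hr x (huS hx)))⟩
  have hsub : S ⊆ ⋃ x ∈ u, closedBall x (5 * r x) := fun x hx => by
    obtain ⟨y, hy, hxy⟩ := hcover x hx
    exact mem_biUnion hy (hxy (mem_closedBall_self (hr x hx).le))
  refine ⟨u, huS, hcount, hdisj, ?_⟩
  calc μ S ≤ ∑' x : u, μ (closedBall (x : E) (5 * r x)) :=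
        (measure_mono hsub).trans (measure_biUnion_le μ hcount _)
    _ = ENNReal.ofReal (5 ^ finrank ℝ E) * ∑' x : u, μ (closedBall (x : E) (r x)) := by
        rw [← ENNReal.tsum_mul_left]
        refine tsum_congr fun x => ?_
        rw [Measure.addHaar_closedBall_mul μ _ (by norm_num) (hr x (huS x.2)).le,
          Measure.addHaar_closedBall_center μ (x : E)]

lemma mul_measure_lt_ballMax_le [Nontrivial E] (h : E → ℝ≥0∞) {τ : ℝ≥0∞} (hτ0 : τ ≠ 0)
    (hτ : τ ≠ ⊤) :
    τ * μ {x | τ < ballMax μ h x} ≤ ENNReal.ofReal (5 ^ finrank ℝ E) * ∫⁻ y, h y ∂μ := by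
  rcases eq_or_ne (∫⁻ y, h y ∂μ) ⊤ with hI | hI
  · rw [hI, ENNReal.mul_top (by simp)]
    exact le_top
  choose! r hr hball using fun x (hx : x ∈ {x | τ < ballMax μ h x}) =>
    exists_mul_measure_closedBall_le hx
  obtain ⟨u, huS, hcount, hdisj, hle⟩ := exists_pairwiseDisjoint_closedBall_measure_le μ hr
    fun x hx => radius_le_of_mul_measure_closedBall_le hτ0 hτ hI
      ((hball x hx).trans (setLIntegral_le_lintegral _ _))
  calc τ * μ {x | τ < ballMax μ h x}
      ≤ τ * (ENNReal.ofReal (5 ^ finrank ℝ E) * ∑' x : u, μ (closedBall (x : E) (r x))) := by gcongr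
    _ = ENNReal.ofReal (5 ^ finrank ℝ E) * ∑' x : u, τ * μ (closedBall (x : E) (r x)) := by
        rw [mul_left_comm, ENNReal.tsum_mul_left]
    _ ≤ ENNReal.ofReal (5 ^ finrank ℝ E) *
          ∑' x : u, ∫⁻ y in closedBall (x : E) (r x), h y ∂μ := by
        gcongr with x
        exact hball x (huS x.2)
    _ = ENNReal.ofReal (5 ^ finrank ℝ E) * ∫⁻ y in ⋃ x ∈ u, closedBall x (r x), h y ∂μ := by
        rw [lintegral_biUnion hcount (fun _ _ => isClosed_closedBall.measurableSet) hdisj]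
    _ ≤ ENNReal.ofReal (5 ^ finrank ℝ E) * ∫⁻ y, h y ∂μ := by
        gcongr
        exact Measure.restrict_le_self

/-- `WeakBound μ s V h`: the distribution function of `h` is at most `V τ ^ (-s)`, that is, the weak
`L^s` quasinorm of `h` is at most `V ^ (1 / s)`. -/
def WeakBound {α : Type*} [MeasurableSpace α] (μ : Measure α) (s : ℝ) (V : ℝ≥0∞) (h : α → ℝ≥0∞) :
    Prop :=
  ∀ τ : ℝ≥0∞, τ ≠ 0 → τ ≠ ⊤ → μ {x | τ < h x} ≤ V * τ ^ (-s)

lemma le_tsum_two_pow_mul {τ a : ℝ≥0∞} (hτ0 : τ ≠ 0) (ha : τ < a) :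
    a ≤ ∑' k : ℕ, {b | 2 ^ k * τ < b}.indicator (fun _ => 2 * (2 ^ k * τ)) a := by
  by_cases hex : ∃ k : ℕ, a ≤ 2 ^ k * τ
  · obtain ⟨k, hk, hmin⟩ : ∃ k : ℕ, a ≤ 2 ^ (k + 1) * τ ∧ 2 ^ k * τ < a := by
      by_contra! hstep
      obtain ⟨k, hk⟩ := hex
      have hnone (j : ℕ) : 2 ^ j * τ < a := by
        induction j with
        | zero => simpa using ha
        | succ j ih => exact not_le.1 fun h => (hstep j h).not_gt ih
      exact (hnone k).not_ge hk
    refine le_trans ?_ (ENNReal.le_tsum k)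
    rwa [indicator_of_mem (show a ∈ {b | 2 ^ k * τ < b} from hmin), ← mul_assoc, ← pow_succ']
  · push Not at hex
    calc a ≤ ⊤ := le_top
      _ = ∑' _ : ℕ, τ := (ENNReal.tsum_const_eq_top_of_ne_zero hτ0).symm
      _ ≤ ∑' k : ℕ, {b | 2 ^ k * τ < b}.indicator (fun _ => 2 * (2 ^ k * τ)) a := by
        refine ENNReal.tsum_le_tsum fun k => ?_
        rw [indicator_of_mem (show a ∈ {b | 2 ^ k * τ < b} from hex k), ← mul_assoc, ← pow_succ']
        exact le_mul_of_one_le_left zero_le (one_le_pow₀ one_le_two)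

lemma rpow_one_sub_eq_mul {c : ℝ≥0∞} (hc0 : c ≠ 0) (hc : c ≠ ⊤) (s : ℝ) :
    c ^ (1 - s) = c * c ^ (-s) := by
  rw [sub_eq_add_neg, ENNReal.rpow_add _ _ hc0 hc, ENNReal.rpow_one]

lemma WeakBound.lintegral_indicator_le {α : Type*} [MeasurableSpace α] {μ : Measure α}
    {h : α → ℝ≥0∞} {s : ℝ} {V : ℝ≥0∞} (hV : WeakBound μ s V h) (hh : Measurable h) {c : ℝ≥0∞}
    (hc0 : c ≠ 0) (hc : c ≠ ⊤) :
    ∫⁻ y, {y | c < h y}.indicator h y ∂μ ≤ 2 * (1 - 2 ^ (1 - s))⁻¹ * V * c ^ (1 - s) := by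
  have hmeas (k : ℕ) : MeasurableSet {y | 2 ^ k * c < h y} := measurableSet_lt measurable_const hh
  calc ∫⁻ y, {y | c < h y}.indicator h y ∂μ
      ≤ ∫⁻ y, ∑' k : ℕ, {y | 2 ^ k * c < h y}.indicator (fun _ => 2 * (2 ^ k * c)) y ∂μ :=
        lintegral_mono fun y => indicator_le (fun y hy => le_tsum_two_pow_mul hc0 hy) y
    _ = ∑' k : ℕ, 2 * (2 ^ k * c) * μ {y | 2 ^ k * c < h y} := by
        rw [lintegral_tsum fun k => (measurable_const.indicator (hmeas k)).aemeasurable]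
        exact tsum_congr fun k => lintegral_indicator_const (hmeas k) _
    _ ≤ ∑' k : ℕ, 2 * (2 ^ k * c) * (V * (2 ^ k * c) ^ (-s)) := by
        gcongr with k
        exact hV _ (mul_ne_zero (by simp) hc0) (ENNReal.mul_ne_top (by finiteness) hc)
    _ = ∑' k : ℕ, 2 * V * c ^ (1 - s) * (2 ^ (1 - s)) ^ k := by
        refine tsum_congr fun k => ?_
        have hk : ((2 : ℝ≥0∞) ^ (1 - s)) ^ k = 2 ^ k * ((2 : ℝ≥0∞) ^ k) ^ (-s) := by
          rw [← rpow_one_sub_eq_mul (by simp) (by finiteness)]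
          simp only [← ENNReal.rpow_natCast, ← ENNReal.rpow_mul, mul_comm]
        rw [ENNReal.mul_rpow_of_ne_top (by finiteness) hc, hk, rpow_one_sub_eq_mul hc0 hc]
        ring
    _ = 2 * (1 - 2 ^ (1 - s))⁻¹ * V * c ^ (1 - s) := by
        rw [ENNReal.tsum_mul_left, ENNReal.tsum_geometric]
        ring

/-- Only the part of `h` above `τ / 2` matters at height `τ`, and that part is integrable. -/
lemma exists_weakBound_ballMax [Nontrivial E] (μ : Measure E) [μ.IsAddHaarMeasure] {s : ℝ}
    (hs : 1 < s) :
    ∃ K : ℝ≥0∞, K ≠ ⊤ ∧ ∀ (h : E → ℝ≥0∞) (V : ℝ≥0∞), Measurable h → WeakBound μ s V h →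
      WeakBound μ s (K * V) (ballMax μ h) := by
  have hρ : (2 : ℝ≥0∞) ^ (1 - s) < 1 :=
    ENNReal.rpow_lt_one_of_one_lt_of_neg ENNReal.one_lt_two (sub_neg.2 hs)
  refine ⟨ENNReal.ofReal (5 ^ finrank ℝ E) * 2 * (1 - 2 ^ (1 - s))⁻¹ * 2 ^ s,
    ENNReal.mul_ne_top (ENNReal.mul_ne_top (by finiteness)
      (ENNReal.inv_ne_top.2 (tsub_pos_of_lt hρ).ne')) (by finiteness),
    fun h V hh hV τ hτ0 hτ => ?_⟩
  have hc0 : τ / 2 ≠ 0 := by simp [hτ0]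
  have hc : τ / 2 ≠ ⊤ := ENNReal.div_ne_top hτ two_ne_zero
  set h₁ : E → ℝ≥0∞ := {y | τ / 2 < h y}.indicator h
  have hsub : {x | τ < ballMax μ h x} ⊆ {x | τ / 2 < ballMax μ h₁ x} := fun x hx => by
    have hlt : τ / 2 + τ / 2 < ballMax μ h₁ x + τ / 2 := by
      rw [ENNReal.add_halves]
      exact (show τ < ballMax μ h x from hx).trans_le (ballMax_le_ballMax_indicator_add h _ x)
    exact lt_of_add_lt_add_right hlt
  have hhalf : (τ / 2) ^ (-s) = 2 ^ s * τ ^ (-s) := by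
    rw [div_eq_mul_inv, ENNReal.mul_rpow_of_ne_top hτ (by norm_num), ENNReal.inv_rpow,
      ENNReal.rpow_neg 2, inv_inv, mul_comm]
  refine (ENNReal.mul_le_mul_iff_right hc0 hc).1 ?_
  calc τ / 2 * μ {x | τ < ballMax μ h x} ≤ τ / 2 * μ {x | τ / 2 < ballMax μ h₁ x} := by gcongr
    _ ≤ ENNReal.ofReal (5 ^ finrank ℝ E) * ∫⁻ y, h₁ y ∂μ := mul_measure_lt_ballMax_le h₁ hc0 hc
    _ ≤ ENNReal.ofReal (5 ^ finrank ℝ E) *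
          (2 * (1 - 2 ^ (1 - s))⁻¹ * V * (τ / 2) ^ (1 - s)) := by
        gcongr
        exact hV.lintegral_indicator_le hh hc0 hc
    _ = τ / 2 * (ENNReal.ofReal (5 ^ finrank ℝ E) * 2 * (1 - 2 ^ (1 - s))⁻¹ * 2 ^ s * V *
          τ ^ (-s)) := by
        rw [rpow_one_sub_eq_mul hc0 hc, hhalf]
        ring

end WeakType

/-! ### Weak quasinorms -/

section WeakNorm

variable {α : Type*} [MeasurableSpace α] {μ : Measure α} {s q : ℝ} {V : ℝ≥0∞} {h : α → ℝ≥0∞}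

lemma WeakBound.mono (hV : WeakBound μ s V h) {g : α → ℝ≥0∞} (hg : ∀ x, g x ≤ h x) :
    WeakBound μ s V g :=
  fun τ hτ0 hτ => (measure_mono fun x hx => lt_of_lt_of_le hx (hg x)).trans (hV τ hτ0 hτ)

lemma WeakBound.rpow (hV : WeakBound μ s V h) (hq : 0 < q) :
    WeakBound μ (s / q) V fun x => h x ^ q := by
  intro τ hτ0 hτ
  have hlevel := hV (τ ^ q⁻¹) (ENNReal.rpow_pos (pos_iff_ne_zero.2 hτ0) hτ).ne'
    (by finiteness)
  rw [← ENNReal.rpow_mul, inv_mul_eq_div, neg_div] at hlevel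
  simpa only [ENNReal.rpow_inv_lt_iff hq] using hlevel

lemma WeakBound.const_mul (hV : WeakBound μ s V h) {C : ℝ≥0∞} (hC : C ≠ ⊤) :
    WeakBound μ s (C ^ s * V) fun x => C * h x := by
  intro τ hτ0 hτ
  rcases eq_or_ne C 0 with rfl | hC0
  · simp
  calc μ {x | τ < C * h x} ≤ μ {x | τ / C < h x} :=
        measure_mono fun x hx => ENNReal.div_lt_of_lt_mul' hx
    _ ≤ V * (τ / C) ^ (-s) := hV _ (by simp [hτ0, hC]) (ENNReal.div_ne_top hτ hC0)
    _ = C ^ s * V * τ ^ (-s) := by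
        rw [div_eq_mul_inv, ENNReal.mul_rpow_of_ne_top hτ (by simp [hC0]), ENNReal.inv_rpow,
          ENNReal.rpow_neg C, inv_inv]
        ring

variable {n : ℕ} {p : ℝ} {g G : Euc n → ℝ≥0∞}

lemma weakBound_weakNorm (μ : Measure (Euc n)) (hp : 0 < p) (g : Euc n → ℝ≥0∞) :
    WeakBound μ p (weakNorm μ p g ^ p) g := by
  intro τ hτ0 hτ
  lift τ to ℝ≥0 using hτ
  have hle : τ * μ {x | τ < g x} ^ (1 / p) ≤ weakNorm μ p g :=
    le_iSup₂_of_le (f := fun (lam : ℝ≥0) (_ : 0 < lam) => lam * μ {x | lam < g x} ^ (1 / p)) τ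
      (pos_iff_ne_zero.2 (by exact_mod_cast hτ0)) le_rfl
  rwa [mul_comm, ← ENNReal.le_div_iff_mul_le (.inl hτ0) (.inl ENNReal.coe_ne_top), one_div,
    ENNReal.rpow_inv_le_iff hp, ENNReal.div_rpow_of_nonneg _ _ hp.le, div_eq_mul_inv,
    ← ENNReal.rpow_neg] at hle

lemma WeakBound.weakNorm_le {μ : Measure (Euc n)} (hV : WeakBound μ p V g) (hp : 0 < p) :
    weakNorm μ p g ≤ V ^ (1 / p) := by
  refine iSup₂_le fun lam hlam => ?_
  have hlam0 : (lam : ℝ≥0∞) ≠ 0 := by exact_mod_cast hlam.ne'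
  calc (lam : ℝ≥0∞) * μ {x | lam < g x} ^ (1 / p)
      ≤ lam * (V * (lam : ℝ≥0∞) ^ (-p)) ^ (1 / p) := by
        gcongr
        exact hV lam hlam0 ENNReal.coe_ne_top
    _ = lam * (lam : ℝ≥0∞)⁻¹ * V ^ (1 / p) := by
        rw [ENNReal.mul_rpow_of_nonneg _ _ (by positivity), ← ENNReal.rpow_mul, neg_mul,
          mul_one_div_cancel hp.ne', ENNReal.rpow_neg_one]
        ring
    _ = V ^ (1 / p) := by rw [ENNReal.mul_inv_cancel hlam0 ENNReal.coe_ne_top, one_mul]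

lemma exists_weakNorm_le_of_le_ballMax_rpow (hn : 0 < n) (hq : 0 < q) (hqp : q < p) :
    ∃ K : ℝ≥0∞, K ≠ ⊤ ∧ ∀ g : Euc n → ℝ≥0∞, Measurable g → ∀ C : ℝ≥0∞, C ≠ ⊤ →
      ∀ G : Euc n → ℝ≥0∞, (∀ x, G x ≤ C * ballMax volume (fun y => g y ^ q) x ^ (1 / q)) →
      weakNorm volume p G ≤ C * K * weakNorm volume p g := by
  have hp : 0 < p := hq.trans hqp
  have : Nonempty (Fin n) := ⟨⟨0, hn⟩⟩
  obtain ⟨K, hK, hweak⟩ :=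
    exists_weakBound_ballMax (volume : Measure (Euc n)) ((one_lt_div hq).2 hqp)
  refine ⟨K ^ (1 / p), by finiteness, fun g hg C hC G hG => ?_⟩
  have hmax := (hweak _ _ (hg.pow_const q) ((weakBound_weakNorm volume hp g).rpow hq)).rpow
    (one_div_pos.2 hq)
  rw [div_div, mul_one_div_cancel hq.ne', div_one] at hmax
  refine (((hmax.const_mul hC).mono hG).weakNorm_le hp).trans_eq ?_
  simp only [ENNReal.mul_rpow_of_nonneg _ _ (one_div_pos.2 hp).le, ← ENNReal.rpow_mul,
    mul_one_div_cancel hp.ne', ENNReal.rpow_one, mul_assoc]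

end WeakNorm

/-! ### The bound at the unit scale -/

section UnitScale

variable {n N : ℕ} {p q b δ : ℝ}

lemma exists_grandMax_brOp_le (hn : 0 < n) (N : ℕ) (hδ : 0 < δ) (hb : n < b)
    (hbN : b ≤ (N + n + 1 : ℕ)) (hbδ : b ≤ brExp n δ) (hq0 : 0 < q) (hq1 : q ≤ 1)
    (hbq : n / q < b) :
    ∃ C : ℝ≥0∞, C ≠ ⊤ ∧ ∀ f : Euc n → ℂ,
      (Integrable fun y : Euc n => (1 + ‖y‖) ^ (-brExp n δ) • f y) → ∀ x,
      grandMax N (brOp n δ 1 f) x ≤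
        C * ballMax volume (fun y => grandMax N f y ^ q) x ^ (1 / q) := by
  obtain ⟨A, hA, hsmooth⟩ := exists_smoothed_kernel hn N hδ hb hbN hbδ
  obtain ⟨C₀, -, hpiece⟩ :=
    exists_enorm_integral_unitBump_mul_le n N ((Nat.cast_nonneg n).trans hb.le)
  obtain ⟨C, hC, hlint⟩ := exists_lintegral_le_ballMax_rpow (volume : Measure (Euc n)) hq0 hq1
    (b := b) (by rwa [finrank_euclideanSpace_fin])
  refine ⟨ENNReal.ofReal (C₀ * A) * C, by finiteness, fun f hf x => ?_⟩
  have hmeas : Measurable (grandMax N f) :=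
    (lowerSemicontinuous_grandMax N (brExp_pos n hδ).le hf).measurable
  refine iSup₂_le fun ψ hψ => iSup₂_le fun t ht => ?_
  obtain ⟨m, hm, η, hη, heq⟩ := hsmooth ψ hψ t ht
  obtain ⟨hint, hconv⟩ := integrable_and_integral_dil_mul_brOp hδ hf ψ ht x
  simp only [heq] at hint hconv
  rw [hconv]
  refine (enorm_integral_le_lintegral_unitBump_mul (g := fun y => m⁻¹ • (x - y)) hint
    (by fun_prop)).trans (hlint _ hmeas _ x m hm _ fun u u' huu => ?_)
  refine (hpiece A hA η hη m hm f x u u' huu).trans_eq ?_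
  rw [ENNReal.ofReal_mul' (by positivity)]

lemma whNorm_eq_zero_of_ae_eq_zero (N : ℕ) (hp : 0 < p) {f : Euc n → ℂ} (hf : f =ᵐ[volume] 0) :
    whNorm N volume p f = 0 := by
  have hzero (x : Euc n) : grandMax N f x = 0 := by
    refine nonpos_iff_eq_zero.1 (iSup₂_le fun φ _ => iSup₂_le fun t _ => ?_)
    rw [integral_eq_zero_of_ae, nnnorm_zero, ENNReal.coe_zero]
    filter_upwards [hf] with y hy
    simp [hy]
  exact nonpos_iff_eq_zero.1 (iSup₂_le fun lam _ => by simp [hzero, hp])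

/-- The exponents `n / b < q < min p 1`, with `b` the smaller of the decay rates of the kernel and
of the test functions, exist because both rates exceed `n / min p 1`. -/
lemma exists_whNorm_brOp_one_le (hn : 0 < n) (hp : 0 < p) (hδ : 0 < δ)
    (hkernel : n / min p 1 < brExp n δ) (htest : n / min p 1 < (N + n + 1 : ℕ)) :
    ∃ C : ℝ≥0, 0 < C ∧ ∀ f : Euc n → ℂ,
      whNorm N volume p (brOp n δ 1 f) ≤ C * whNorm N volume p f := by
  have hn' : (0 : ℝ) < n := by exact_mod_cast hn
  have hmin : 0 < min p 1 := lt_min hp one_pos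
  obtain ⟨b, hb⟩ : ∃ b, b = min (brExp n δ) ((N + n + 1 : ℕ) : ℝ) := ⟨_, rfl⟩
  have hpb : n / min p 1 < b := hb ▸ lt_min hkernel htest
  have hnb : n < b := (le_div_self hn'.le hmin (min_le_right _ _)).trans_lt hpb
  obtain ⟨q, hbq, hqp⟩ := exists_between ((div_lt_comm₀ hmin (hn'.trans hnb)).1 hpb)
  have hq : 0 < q := (div_pos hn' (hn'.trans hnb)).trans hbq
  obtain ⟨C, hC, hpointwise⟩ := exists_grandMax_brOp_le hn N hδ hnb (hb ▸ min_le_right _ _)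
    (hb ▸ min_le_left _ _) hq (hqp.le.trans (min_le_right _ _))
    ((div_lt_comm₀ (hn'.trans hnb) hq).1 hbq)
  obtain ⟨K, hK, hweak⟩ :=
    exists_weakNorm_le_of_le_ballMax_rpow hn hq (hqp.trans_le (min_le_left _ _))
  refine ⟨(C * K).toNNReal + 1, by positivity, fun f => ?_⟩
  rcases ae_not_integrable_or_integrable_weight_smul hn hδ f with hundef | hint
  · have hzero : brOp n δ 1 f =ᵐ[volume] 0 := by
      filter_upwards [hundef] with x hx
      rw [brOp_one, integral_undef hx, Pi.zero_apply]
    rw [whNorm_eq_zero_of_ae_eq_zero N hp hzero]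
    exact zero_le
  · have hmeas : Measurable (grandMax N f) :=
      (lowerSemicontinuous_grandMax N (brExp_pos n hδ).le hint).measurable
    refine (hweak _ hmeas C hC _ (hpointwise f hint)).trans ?_
    rw [whNorm, ENNReal.coe_add, ENNReal.coe_toNNReal (ENNReal.mul_ne_top hC hK)]
    gcongr
    exact le_self_add

end UnitScale

/-! ### Reduction to the unit scale -/

section Dilation

variable {n N : ℕ} {p δ c R : ℝ}

lemma integral_dil_mul_comp_smul (φ f : Euc n → ℂ) (hc : 0 < c) (t : ℝ) (x : Euc n) :
    ∫ y, dil φ t (x - y) * f (c • y) = ∫ y, dil φ (c * t) (c • x - y) * f y := by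
  have hdil (z : Euc n) : (c ^ n)⁻¹ • dil φ t (x - c⁻¹ • z) = dil φ (c * t) (c • x - z) := by
    have harg : (c * t)⁻¹ • (c • x - z) = t⁻¹ • (x - c⁻¹ • z) := by
      rw [mul_inv_rev, mul_smul, smul_sub c⁻¹, inv_smul_smul₀ hc.ne']
    simp only [dil, harg, mul_pow, Complex.real_smul]
    push_cast
    ring
  calc ∫ y, dil φ t (x - y) * f (c • y)
      = ∫ y, dil φ t (x - c⁻¹ • c • y) * f (c • y) := by simp only [inv_smul_smul₀ hc.ne']
    _ = (c ^ n)⁻¹ • ∫ z, dil φ t (x - c⁻¹ • z) * f z := by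
        rw [Measure.integral_comp_smul volume fun z : Euc n => dil φ t (x - c⁻¹ • z) * f z,
          finrank_euclideanSpace_fin, abs_of_pos (by positivity)]
    _ = ∫ y, dil φ (c * t) (c • x - y) * f y := by
        simp only [← integral_smul, ← smul_mul_assoc, hdil]

lemma grandMax_comp_smul_le (N : ℕ) (f : Euc n → ℂ) (hc : 0 < c) (x : Euc n) :
    grandMax N (fun y => f (c • y)) x ≤ grandMax N f (c • x) := by
  refine iSup₂_le fun φ hφ => iSup₂_le fun t ht => ?_
  rw [integral_dil_mul_comp_smul φ f hc]
  exact le_iSup₂_of_le φ hφ (le_iSup₂_of_le (c * t) (by positivity) le_rfl)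

lemma grandMax_comp_smul (N : ℕ) (f : Euc n → ℂ) (hc : 0 < c) (x : Euc n) :
    grandMax N (fun y => f (c • y)) x = grandMax N f (c • x) := by
  refine le_antisymm (grandMax_comp_smul_le N f hc x) ?_
  simpa only [smul_inv_smul₀ hc.ne', inv_smul_smul₀ hc.ne'] using
    grandMax_comp_smul_le N (fun y => f (c • y)) (inv_pos.2 hc) (c • x)

lemma whNorm_comp_smul (N : ℕ) (hp : 0 < p) (f : Euc n → ℂ) (hc : 0 < c) :
    whNorm N volume p (fun y => f (c • y)) =
      ENNReal.ofReal ((c ^ n)⁻¹) ^ (1 / p) * whNorm N volume p f := by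
  simp only [whNorm, weakNorm, ENNReal.mul_iSup]
  refine iSup_congr fun lam => iSup_congr fun _ => ?_
  have hset : {x | (lam : ℝ≥0∞) < grandMax N (fun y => f (c • y)) x} =
      (c • ·) ⁻¹' {x | (lam : ℝ≥0∞) < grandMax N f x} := by
    simp only [grandMax_comp_smul N f hc, preimage_ofPred_eq]
  rw [hset, Measure.addHaar_preimage_smul volume hc.ne', finrank_euclideanSpace_fin,
    abs_of_pos (by positivity), ENNReal.mul_rpow_of_nonneg _ _ (by positivity), mul_left_comm]

lemma brOp_comp_smul (n : ℕ) (δ : ℝ) (hR : 0 < R) (f : Euc n → ℂ) :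
    brOp n δ R (fun y => f (R • y)) = fun x => brOp n δ 1 f (R • x) := by
  funext x
  rw [brOp, brOp, integral_dil_mul_comp_smul _ f hR, mul_inv_cancel₀ hR.ne', inv_one]

lemma whNorm_brOp_le_of_unit_scale (hp : 0 < p) {C : ℝ≥0}
    (hC : ∀ f : Euc n → ℂ, whNorm N volume p (brOp n δ 1 f) ≤ C * whNorm N volume p f)
    (hR : 0 < R) (f : Euc n → ℂ) :
    whNorm N volume p (brOp n δ R f) ≤ C * whNorm N volume p f := by
  obtain ⟨F, rfl⟩ : ∃ F : Euc n → ℂ, f = fun y => F (R • y) :=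
    ⟨fun y => f (R⁻¹ • y), by simp only [inv_smul_smul₀ hR.ne']⟩
  rw [brOp_comp_smul n δ hR, whNorm_comp_smul N hp _ hR, whNorm_comp_smul N hp _ hR,
    mul_left_comm]
  gcongr
  exact hC F

lemma brOp_dim_zero (δ R : ℝ) (f : Euc 0 → ℂ) : brOp 0 δ R f = f := by
  have hkernel (x : Euc 0) : brKernel 0 δ x = 1 := by
    rw [brKernel, Real.fourierInv_eq, volume_euclideanSpace_eq_dirac, integral_dirac]
    simp
  funext x
  rw [brOp, volume_euclideanSpace_eq_dirac, integral_dirac, Subsingleton.elim x 0]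
  simp [dil, hkernel]

end Dilation

theorem bochnerRiesz_weakHardy_bounded_general {n N : ℕ} {p δ : ℝ} (hp : 0 < p)
    (hδ : n / min p 1 - (n + 1) / 2 < δ) (hN : ⌊n * (1 / p - 1)⌋ ≤ N) :
    ∃ C : ℝ≥0, 0 < C ∧ ∀ R : ℝ, 0 < R → ∀ f : Euc n → ℂ,
      whNorm N volume p (brOp n δ R f) ≤ C * whNorm N volume p f := by
  rcases Nat.eq_zero_or_pos n with rfl | hn
  · exact ⟨1, one_pos, fun R _ f => by rw [brOp_dim_zero, ENNReal.coe_one, one_mul]⟩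
  have hn' : (1 : ℝ) ≤ n := by exact_mod_cast hn
  have hδ0 : 0 < δ := by
    have := le_div_self (zero_le_one.trans hn') (lt_min hp one_pos) (min_le_right p 1)
    linarith
  have hkernel : n / min p 1 < brExp n δ := by
    rw [brExp]
    linarith
  have htest : n / min p 1 < (N + n + 1 : ℕ) := by
    have hfloor : n * (1 / p - 1) < N + 1 :=
      (Int.lt_floor_add_one _).trans_le (by gcongr; exact_mod_cast hN)
    push_cast
    rcases min_choice p 1 with h | h <;> rw [h]
    · rw [mul_sub, mul_one_div, mul_one] at hfloor
      linarith
    · rw [div_one]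
      linarith [Nat.cast_nonneg (α := ℝ) N]
  obtain ⟨C, hC, hunit⟩ := exists_whNorm_brOp_one_le hn hp hδ0 hkernel htest
  exact ⟨C, hC, fun R hR => whNorm_brOp_le_of_unit_scale hp hunit hR⟩

/-- Let `0 < p ≤ 1` and `δ > n/p - (n+1)/2`, and suppose that
`δ - (n-1)/2` is not a positive integer. Then there is a constant `C > 0`, independent of
`f` and `R`, such that for every `0 < R < ∞` and every `f ∈ WH^p(ℝⁿ)` one has
`‖T^δ_R f‖_{WH^p} ≤ C ‖f‖_{WH^p}`. -/
theorem bochnerRiesz_weakHardy_bounded (n : ℕ) (p δ : ℝ)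
    (hp0 : 0 < p) (hp1 : p ≤ 1)
    (hδ : (n : ℝ) / p - ((n : ℝ) + 1) / 2 < δ)
    (hδ' : ¬∃ m : ℕ, 0 < m ∧ δ - ((n : ℝ) - 1) / 2 = (m : ℝ)) :
    ∃ C : ℝ≥0, 0 < C ∧ ∀ (R : ℝ), 0 < R → ∀ f : Euc n → ℂ,
      whNorm (⌊(n : ℝ) * (1 / p - 1)⌋.toNat) volume p f ≠ ⊤ →
      whNorm (⌊(n : ℝ) * (1 / p - 1)⌋.toNat) volume p (brOp n δ R f) ≤
        (C : ℝ≥0∞) * whNorm (⌊(n : ℝ) * (1 / p - 1)⌋.toNat) volume p f := by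
  obtain ⟨C, hC, hbound⟩ := bochnerRiesz_weakHardy_bounded_general hp0
    (by rwa [min_eq_left hp1]) (Int.self_le_toNat _)
  exact ⟨C, hC, fun R hR f _ => hbound R hR f⟩
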